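/- Existence of inhomogeneous global minimizers trapping U₀ (Theorem 1.1(i)): assume 0 ∈ ∂{U₀ > 0}. Then there exist global minimizers Ū and U̲ of J such that U̲(x) ≤ U₀(x) ≤ Ū(x) for all x ∈ ℝⁿ, the open unit ball B₁ is contained in {Ū > 0}, B₁ ⊆ {U̲ = 0}, the sets ∂{Ū > 0} and ∂{U̲ > 0} are nonempty, and dist(0, ∂{Ū > 0}) = dist(0, ∂{U̲ > 0}) = 1. -/

import Mathlib

open MeasureTheory Metric Set Filter ENNReal NNReal

/-- The Alt–Caffarelli energy `J_D(u) = ∫_D (‖∇u‖² + 𝟙_{u>0})`, valued in `[0,∞]`. -/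
noncomputable def JE {n : ℕ} (D : Set (EuclideanSpace ℝ (Fin n)))
    (u : EuclideanSpace ℝ (Fin n) → ℝ) : ℝ≥0∞ :=
  ∫⁻ x in D, ((‖gradient u x‖₊ : ℝ≥0∞) ^ 2 + if 0 < u x then 1 else 0)

/-- `u` is a (nonnegative, locally Lipschitz) minimizer of `J` in the open set `Ω`:
for every nonnegative locally Lipschitz competitor `v` with `{v ≠ u}` a bounded subset
of `Ω`, one has `J_{Ω ∩ B}(u) ≤ J_{Ω ∩ B}(v)` for every open ball `B ⊇ {v ≠ u}`. -/
def IsMinimizer {n : ℕ} (Ω : Set (EuclideanSpace ℝ (Fin n)))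
    (u : EuclideanSpace ℝ (Fin n) → ℝ) : Prop :=
  (∀ x, 0 ≤ u x) ∧ LocallyLipschitz u ∧
  ∀ v : EuclideanSpace ℝ (Fin n) → ℝ, (∀ x, 0 ≤ v x) → LocallyLipschitz v →
    Bornology.IsBounded {x | v x ≠ u x} → {x | v x ≠ u x} ⊆ Ω →
    ∀ (c : EuclideanSpace ℝ (Fin n)) (r : ℝ), {x | v x ≠ u x} ⊆ Metric.ball c r →
      JE (Ω ∩ Metric.ball c r) u ≤ JE (Ω ∩ Metric.ball c r) v


namespace ACF
open Topology

abbrev Eu (n : ℕ) := EuclideanSpace ℝ (Fin n)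

/-- energy density -/
noncomputable def dens {n : ℕ} (u : Eu n → ℝ) (x : Eu n) : ℝ :=
  ‖gradient u x‖ ^ 2 + if 0 < u x then 1 else 0

def IsLip {n : ℕ} (u : Eu n → ℝ) : Prop := ∃ K : ℝ≥0, LipschitzWith K u

def EqOff {n : ℕ} (r : ℝ) (u v : Eu n → ℝ) : Prop := ∀ x, r ≤ ‖x‖ → u x = v x

/-- energy difference -/
noncomputable def EX {n : ℕ} (v u : Eu n → ℝ) : ℝ := ∫ x, (dens v x - dens u x)

variable {n : ℕ}

theorem IsLip.continuous {u : Eu n → ℝ} (h : IsLip u) : Continuous u := by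
  obtain ⟨K, hK⟩ := h; exact hK.continuous

theorem IsLip.ae_diff {u : Eu n → ℝ} (h : IsLip u) : ∀ᵐ x, DifferentiableAt ℝ u x := by
  obtain ⟨K, hK⟩ := h; exact hK.ae_differentiableAt

theorem IsLip.max {u v : Eu n → ℝ} (hu : IsLip u) (hv : IsLip v) : IsLip (fun x => max (u x) (v x)) := by
  obtain ⟨K, hK⟩ := hu
  obtain ⟨L, hL⟩ := hv
  exact ⟨_, hK.max hL⟩

theorem IsLip.min {u v : Eu n → ℝ} (hu : IsLip u) (hv : IsLip v) : IsLip (fun x => min (u x) (v x)) := by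
  obtain ⟨K, hK⟩ := hu
  obtain ⟨L, hL⟩ := hv
  exact ⟨_, hK.min hL⟩

theorem IsLip.add {u v : Eu n → ℝ} (hu : IsLip u) (hv : IsLip v) : IsLip (fun x => u x + v x) := by
  obtain ⟨K, hK⟩ := hu
  obtain ⟨L, hL⟩ := hv
  exact ⟨_, hK.add hL⟩

theorem IsLip.sub {u v : Eu n → ℝ} (hu : IsLip u) (hv : IsLip v) : IsLip (fun x => u x - v x) := by
  obtain ⟨K, hK⟩ := hu
  obtain ⟨L, hL⟩ := hv
  exact ⟨_, hK.sub hL⟩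

theorem isLip_const (c : ℝ) : IsLip (fun _ : Eu n => c) := ⟨0, LipschitzWith.const c⟩

theorem IsLip.const_mul {u : Eu n → ℝ} (hu : IsLip u) (c : ℝ) : IsLip (fun x => c * u x) := by
  obtain ⟨K, hK⟩ := hu
  refine ⟨‖c‖₊ * K, ?_⟩
  have := (lipschitzWith_smul c (β := ℝ)).comp hK
  exact this

theorem gradient_sub {u v : Eu n → ℝ} {x : Eu n} (hu : DifferentiableAt ℝ u x)
    (hv : DifferentiableAt ℝ v x) :
    gradient (fun y => u y - v y) x = gradient u x - gradient v x := by
  unfold gradient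
  rw [fderiv_fun_sub hu hv, map_sub]

theorem gradient_add {u v : Eu n → ℝ} {x : Eu n} (hu : DifferentiableAt ℝ u x)
    (hv : DifferentiableAt ℝ v x) :
    gradient (fun y => u y + v y) x = gradient u x + gradient v x := by
  unfold gradient
  rw [fderiv_fun_add hu hv, map_add]

theorem gradient_const_mul {u : Eu n → ℝ} {x : Eu n} (c : ℝ) (hu : DifferentiableAt ℝ u x) :
    gradient (fun y => c * u y) x = c • gradient u x := by
  unfold gradient
  rw [fderiv_const_mul hu, map_smulₛₗ]; simp

theorem norm_gradient_eq (u : Eu n → ℝ) (x : Eu n) : ‖gradient u x‖ = ‖fderiv ℝ u x‖ := by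
  unfold gradient; simp

theorem norm_gradient_le {u : Eu n → ℝ} {K : ℝ≥0} (h : LipschitzWith K u) (x : Eu n) :
    ‖gradient u x‖ ≤ K := by
  rw [norm_gradient_eq]; exact norm_fderiv_le_of_lipschitz ℝ h

theorem measurable_gradient (u : Eu n → ℝ) : Measurable (gradient u) := by
  unfold gradient
  exact (LinearIsometryEquiv.continuous _).measurable.comp (measurable_fderiv ℝ u)

theorem ae_grad_zero {w : Eu n → ℝ} (hw : IsLip w) : ∀ᵐ x, w x = 0 → gradient w x = 0 := by
  have habs : IsLip (fun x => |w x|) := by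
    obtain ⟨K, hK⟩ := hw
    exact ⟨1 * K, (lipschitzWith_one_norm (E := ℝ)).comp hK⟩
  filter_upwards [habs.ae_diff] with x h2 h0
  have hmin : IsLocalMin (fun x => |w x|) x := by
    filter_upwards with y
    simp [h0]
  have h3 := hmin.fderiv_eq_zero
  have h4 : HasFDerivAt (fun x => |w x|) (0 : Eu n →L[ℝ] ℝ) x := by
    rw [← h3]; exact h2.hasFDerivAt
  have h5 : HasFDerivAt w (0 : Eu n →L[ℝ] ℝ) x := by
    rw [hasFDerivAt_iff_isLittleO] at h4 ⊢
    simp only [h0, abs_zero, sub_zero, _root_.zero_apply] at h4 ⊢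
    exact Asymptotics.isLittleO_norm_left.1 (by simpa using h4)
  unfold gradient
  rw [h5.fderiv, map_zero]

theorem ae_grad_eq {u v : Eu n → ℝ} (hu : IsLip u) (hv : IsLip v) :
    ∀ᵐ x, u x = v x → gradient u x = gradient v x := by
  filter_upwards [ae_grad_zero (hu.sub hv), hu.ae_diff, hv.ae_diff] with x h1 h2 h3 h4
  have := h1 (by linarith)
  rw [gradient_sub h2 h3] at this
  exact sub_eq_zero.1 this

theorem ae_dens_eq {u v : Eu n → ℝ} (hu : IsLip u) (hv : IsLip v) :
    ∀ᵐ x, u x = v x → dens u x = dens v x := by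
  filter_upwards [ae_grad_eq hu hv] with x h1 h2
  unfold dens; rw [h1 h2, h2]

theorem dens_nonneg (u : Eu n → ℝ) (x : Eu n) : 0 ≤ dens u x := by
  unfold dens; split_ifs <;> positivity

theorem dens_le {u : Eu n → ℝ} {K : ℝ≥0} (h : LipschitzWith K u) (x : Eu n) :
    dens u x ≤ (K : ℝ) ^ 2 + 1 := by
  unfold dens
  have := norm_gradient_le h x
  gcongr
  split_ifs <;> norm_num

theorem measurable_dens {u : Eu n → ℝ} (hu : IsLip u) : Measurable (dens u) := by
  unfold dens
  refine Measurable.add ((measurable_gradient u).norm.pow_const 2) ?_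
  exact Measurable.ite (measurableSet_lt measurable_const hu.continuous.measurable)
    measurable_const measurable_const

theorem integrableOn_dens {u : Eu n → ℝ} (hu : IsLip u) (r : ℝ) :
    IntegrableOn (dens u) (ball 0 r) := by
  obtain ⟨K, hK⟩ := id hu
  refine Measure.integrableOn_of_bounded (M := (K : ℝ) ^ 2 + 1) measure_ball_lt_top.ne
    (measurable_dens hu).aestronglyMeasurable ?_
  filter_upwards with x
  rw [Real.norm_of_nonneg (dens_nonneg u x)]
  exact dens_le hK x

theorem ae_dens_sub_eq {u v : Eu n → ℝ} (hu : IsLip u) (hv : IsLip v) {r : ℝ} (h : EqOff r u v) :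
    (fun x => dens u x - dens v x) =ᵐ[volume]
      (ball 0 r).indicator (fun x => dens u x - dens v x) := by
  filter_upwards [ae_dens_eq hu hv] with x hx
  by_cases hxr : x ∈ ball (0 : Eu n) r
  · rw [indicator_of_mem hxr]
  · rw [indicator_of_notMem hxr, hx (h x (by simpa using hxr)), sub_self]

theorem integrable_dens_sub {u v : Eu n → ℝ} (hu : IsLip u) (hv : IsLip v) {r : ℝ}
    (h : EqOff r u v) : Integrable (fun x => dens u x - dens v x) := by
  refine Integrable.congr ?_ (ae_dens_sub_eq hu hv h).symm
  rw [integrable_indicator_iff measurableSet_ball]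
  exact (integrableOn_dens hu r).sub (integrableOn_dens hv r)

theorem EX_eq {u v : Eu n → ℝ} (hu : IsLip u) (hv : IsLip v) {r : ℝ} (h : EqOff r u v) :
    EX u v = (∫ x in ball 0 r, dens u x) - ∫ x in ball 0 r, dens v x := by
  unfold EX
  rw [integral_congr_ae (ae_dens_sub_eq hu hv h), integral_indicator measurableSet_ball,
    integral_sub (integrableOn_dens hu r) (integrableOn_dens hv r)]

theorem EqOff.trans {u v w : Eu n → ℝ} {r : ℝ} (h : EqOff r u v) (h' : EqOff r v w) : EqOff r u w :=
  fun x hx => (h x hx).trans (h' x hx)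

theorem EqOff.symm {u v : Eu n → ℝ} {r : ℝ} (h : EqOff r u v) : EqOff r v u :=
  fun x hx => (h x hx).symm

theorem EqOff.mono {u v : Eu n → ℝ} {r s : ℝ} (h : EqOff r u v) (hs : r ≤ s) : EqOff s u v :=
  fun x hx => h x (hs.trans hx)

theorem EX_add {u v w : Eu n → ℝ} (hu : IsLip u) (hv : IsLip v) (hw : IsLip w) {r : ℝ}
    (h : EqOff r u v) (h' : EqOff r v w) : EX u v + EX v w = EX u w := by
  rw [EX_eq hu hv h, EX_eq hv hw h', EX_eq hu hw (h.trans h')]; ring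

theorem ae_max_min {u v : Eu n → ℝ} (hu : IsLip u) (hv : IsLip v) :
    ∀ᵐ x, dens (fun y => max (u y) (v y)) x + dens (fun y => min (u y) (v y)) x
      = dens u x + dens v x := by
  filter_upwards [ae_dens_eq (hu.max hv) hu, ae_dens_eq (hu.max hv) hv, ae_dens_eq (hu.min hv) hu,
    ae_dens_eq (hu.min hv) hv] with x h1 h2 h3 h4
  rcases le_total (u x) (v x) with h | h
  · rw [h2 (max_eq_right h), h3 (min_eq_left h)]; ring
  · rw [h1 (max_eq_left h), h4 (min_eq_right h)]

end ACF

namespace ACF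
open Topology
variable {n : ℕ}

theorem integrable_of_bdd_supp {f : Eu n → ℝ} (hf : Measurable f) {M r : ℝ} (hM : ∀ x, |f x| ≤ M)
    (hr : ∀ x, r ≤ ‖x‖ → f x = 0) : Integrable f := by
  have h1 : f = (ball (0 : Eu n) r).indicator f := by
    ext x
    by_cases hx : x ∈ ball (0 : Eu n) r
    · rw [indicator_of_mem hx]
    · rw [indicator_of_notMem hx, hr x (by simpa using hx)]
  rw [h1, integrable_indicator_iff measurableSet_ball]
  refine Measure.integrableOn_of_bounded (M := M) measure_ball_lt_top.ne
    hf.aestronglyMeasurable ?_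
  filter_upwards with x
  exact hM x

theorem hasCompactSupport_of_off {f : Eu n → ℝ} {r : ℝ} (hr : ∀ x, r ≤ ‖x‖ → f x = 0) :
    HasCompactSupport f := by
  refine HasCompactSupport.intro (isCompact_closedBall (0 : Eu n) r) fun x hx => hr x ?_
  simp at hx; exact hx.le

theorem integrable_fderiv_mul {g : Eu n → ℝ} (hg : Continuous g) {η : Eu n → ℝ} (hη : IsLip η)
    (hc : HasCompactSupport η) (e : Eu n) : Integrable (fun x => g x * fderiv ℝ η x e) := by
  obtain ⟨K, hK⟩ := hη
  obtain ⟨R, hR⟩ := hc.isCompact.isBounded.subset_ball (0 : Eu n)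
  obtain ⟨C, hC⟩ := (isCompact_closedBall (0 : Eu n) R).exists_bound_of_continuousOn hg.continuousOn
  have hz : ∀ x, R ≤ ‖x‖ → fderiv ℝ η x = 0 := by
    intro x hx
    by_contra h
    have : x ∈ tsupport η := support_fderiv_subset ℝ h
    have := hR this
    simp at this; linarith
  refine integrable_of_bdd_supp (r := R) (M := |C| * (K * ‖e‖)) ?_ ?_ ?_
  · exact hg.measurable.mul (measurable_fderiv_apply_const ℝ η e)
  · intro x
    rw [abs_mul]
    by_cases hx : R ≤ ‖x‖
    · rw [hz x hx]; simp; positivity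
    · have h1 := hC x (by simp; linarith)
      have h2 : |fderiv ℝ η x e| ≤ K * ‖e‖ := by
        refine ((fderiv ℝ η x).le_opNorm e).trans ?_
        gcongr
        exact norm_fderiv_le_of_lipschitz ℝ hK
      exact mul_le_mul (h1.trans (le_abs_self C)) h2 (abs_nonneg _) (abs_nonneg _)
  · intro x hx
    rw [hz x hx]; simp

theorem ibp1 {g : Eu n → ℝ} (hg : ContDiff ℝ 1 g) {η : Eu n → ℝ} (hη : IsLip η)
    (hc : HasCompactSupport η) (e : Eu n) :
    ∫ x, fderiv ℝ g x e * η x = - ∫ x, g x * fderiv ℝ η x e := by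
  obtain ⟨K, hK⟩ := id hη
  obtain ⟨R, hR⟩ := hc.isCompact.isBounded.subset_ball (0 : Eu n)
  let b : ContDiffBump (0 : Eu n) := ⟨|R| + 1, |R| + 2, by positivity, by linarith⟩
  have hb : ContDiff ℝ 1 (fun x => b x * g x) := b.contDiff.mul hg
  have hbc : HasCompactSupport (fun x => b x * g x) := b.hasCompactSupport.mul_right
  obtain ⟨C, hC⟩ := hb.lipschitzWith_of_hasCompactSupport hbc (by norm_num)
  have key := LipschitzWith.integral_lineDeriv_mul_eq (μ := volume) hC hK hc e
  have hone : ∀ x ∈ tsupport η, (fun x => b x * g x) =ᶠ[𝓝 x] g := by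
    intro x hx
    have h1 : x ∈ ball (0 : Eu n) (|R| + 1) := by
      have := hR hx
      simp at this ⊢
      have := le_abs_self R
      linarith
    filter_upwards [isOpen_ball.mem_nhds h1] with y hy
    have : b y = 1 := b.one_of_mem_closedBall (ball_subset_closedBall hy)
    rw [this, one_mul]
  have e1 : ∫ x, lineDeriv ℝ (fun x => b x * g x) x e * η x = ∫ x, fderiv ℝ g x e * η x := by
    congr 1; ext x
    by_cases hx : x ∈ tsupport η
    · congr 1
      rw [(hb.differentiable one_ne_zero x).lineDeriv_eq_fderiv, (hone x hx).fderiv_eq]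
    · rw [image_eq_zero_of_notMem_tsupport hx]; simp
  have e2 : ∫ x, lineDeriv ℝ η x (-e) * (b x * g x) = ∫ x, -(g x * fderiv ℝ η x e) := by
    apply integral_congr_ae
    filter_upwards [hη.ae_diff] with x hx
    rw [hx.lineDeriv_eq_fderiv]
    by_cases hxs : x ∈ tsupport η
    · have := (hone x hxs).self_of_nhds
      simp only at this
      rw [this, map_neg]; ring
    · have : fderiv ℝ η x = 0 := by
        by_contra h
        exact hxs (support_fderiv_subset ℝ h)
      rw [this]; simp
  rw [← e1, key, e2, integral_neg]

/-- Gaussian -/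
noncomputable def ga (β : ℝ) (p x : Eu n) : ℝ := Real.exp (-β * ‖x - p‖ ^ 2)

theorem ga_pos (β : ℝ) (p x : Eu n) : 0 < ga β p x := Real.exp_pos _

theorem ga_contDiff (β : ℝ) (p : Eu n) : ContDiff ℝ 2 (ga β p) := by
  unfold ga
  apply ContDiff.exp
  apply contDiff_const.mul
  exact (contDiff_id.sub contDiff_const).norm_sq ℝ

theorem ga_fderiv (β : ℝ) (p x : Eu n) (e : Eu n) :
    fderiv ℝ (ga β p) x e = -2 * β * ga β p x * inner ℝ (x - p) e := by
  have h1 : HasFDerivAt (fun y : Eu n => y - p) (ContinuousLinearMap.id ℝ (Eu n)) x :=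
    (hasFDerivAt_id x).sub_const p
  have h2 := (h1.norm_sq.const_mul (-β)).exp
  have h3 : fderiv ℝ (ga β p) x = _ := h2.fderiv
  rw [h3]
  simp [ga, inner_sub_left]
  ring

theorem ga_gradient (β : ℝ) (p x : Eu n) :
    gradient (ga β p) x = (-2 * β * ga β p x) • (x - p) := by
  refine ext_inner_right ℝ fun e => ?_
  rw [inner_gradient_left, ga_fderiv, inner_smul_left]
  simp

theorem ga_ibp_coord (β : ℝ) (p : Eu n) {η : Eu n → ℝ} (hη : IsLip η)
    (hc : HasCompactSupport η) (i : Fin n) :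
    ∫ x, (-2 * β * ga β p x * (x i - p i)) * fderiv ℝ η x (EuclideanSpace.single i 1) =
     - ∫ x, (ga β p x * (4 * β ^ 2 * (x i - p i) ^ 2 - 2 * β)) * η x := by
  have hg : ContDiff ℝ 1 (fun x : Eu n => -2 * β * ga β p x * (x i - p i)) := by
    refine (contDiff_const.mul ((ga_contDiff β p).of_le (by norm_num))).mul (ContDiff.sub ?_ contDiff_const)
    exact (EuclideanSpace.proj i : Eu n →L[ℝ] ℝ).contDiff
  have h := ibp1 hg hη hc (EuclideanSpace.single i 1)
  rw [eq_neg_iff_add_eq_zero, add_comm, ← eq_neg_iff_add_eq_zero, ← h]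
  congr 1; ext x; congr 1
  have h1 : HasFDerivAt (ga β p) (fderiv ℝ (ga β p) x) x :=
    ((ga_contDiff β p).differentiable (by norm_num) x).hasFDerivAt
  have h2 : HasFDerivAt (fun x : Eu n => x i - p i) (EuclideanSpace.proj i : Eu n →L[ℝ] ℝ) x :=
    ((EuclideanSpace.proj i : Eu n →L[ℝ] ℝ).hasFDerivAt (x := x)).sub_const _
  have h3 := (h1.const_mul (-2 * β)).mul h2
  have h4 : fderiv ℝ (fun x : Eu n => -2 * β * ga β p x * (x i - p i)) x = _ := h3.fderiv
  rw [h4]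
  simp [ga_fderiv, EuclideanSpace.inner_single_right]
  ring

theorem ga_ibp (β : ℝ) (p : Eu n) {η : Eu n → ℝ} (hη : IsLip η) (hc : HasCompactSupport η) :
    Integrable (fun x => inner ℝ ((-2 * β * ga β p x) • (x - p)) (gradient η x)) ∧
    ∫ x, inner ℝ ((-2 * β * ga β p x) • (x - p)) (gradient η x) =
     - ∫ x, (ga β p x * (4 * β ^ 2 * ‖x - p‖ ^ 2 - 2 * β * n)) * η x := by
  have e1 : ∀ x : Eu n, inner ℝ ((-2 * β * ga β p x) • (x - p)) (gradient η x) =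
     ∑ i, (-2 * β * ga β p x * (x i - p i)) * fderiv ℝ η x (EuclideanSpace.single i 1) := by
    intro x
    rw [PiLp.inner_apply]
    refine Finset.sum_congr rfl fun i _ => ?_
    rw [← inner_gradient_left, EuclideanSpace.inner_single_right]
    simp; ring
  have hgac := (ga_contDiff β p).continuous
  have hintg : ∀ i, Integrable (fun x : Eu n => (-2 * β * ga β p x * (x i - p i)) * fderiv ℝ η x (EuclideanSpace.single i 1)) := by
    intro i
    refine integrable_fderiv_mul ?_ hη hc _
    fun_prop
  simp_rw [e1]
  refine ⟨integrable_finsetSum _ fun i _ => hintg i, ?_⟩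
  rw [integral_finsetSum _ fun i _ => hintg i]
  simp_rw [ga_ibp_coord β p hη hc]
  rw [Finset.sum_neg_distrib, ← integral_finsetSum]
  · congr 2; ext x
    rw [← Finset.sum_mul, ← Finset.mul_sum, Finset.sum_sub_distrib, ← Finset.mul_sum,
      EuclideanSpace.norm_sq_eq]
    simp; ring_nf; simp
  · intro i _
    refine Continuous.integrable_of_hasCompactSupport ?_ hc.mul_left
    have := hη.continuous
    fun_prop

end ACF

namespace ACF
open Topology
variable {n : ℕ}

noncomputable def gl (β : ℝ) (p x : Eu n) : ℝ := ga β p x * (4 * β ^ 2 * ‖x - p‖ ^ 2 - 2 * β * n)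

theorem eq_zero_of_ae_zero {η : Eu n → ℝ} (hη : Continuous η) (h : ∀ᵐ x, η x = 0) : ∀ x, η x = 0 := by
  have : η =ᵐ[volume] (fun _ => (0:ℝ)) := h
  have := (Continuous.ae_eq_iff_eq volume hη continuous_const).1 this
  exact fun x => congrFun this x

theorem core {η F : Eu n → ℝ} (hη : IsLip η) (hc : HasCompactSupport η)
    (hη0 : ∀ x, 0 ≤ η x) (hF : Integrable F) (β c : ℝ) (p : Eu n)
    (hI : 0 ≤ ∫ x, (c * inner ℝ (gradient (ga β p) x) (gradient η x) + F x))
    (h1 : ∀ x, 0 < η x → -c * gl β p x * η x + F x < 0) (h2 : ∀ x, η x = 0 → F x ≤ 0) :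
    ∀ x, η x = 0 := by
  obtain ⟨hi, he⟩ := ga_ibp β p hη hc
  simp_rw [ga_gradient] at hI
  rw [integral_add (hi.const_mul c) hF, integral_const_mul, he] at hI
  have hgc := (ga_contDiff β p).continuous
  have hηc := hη.continuous
  have hi2 : Integrable (fun x => gl β p x * η x) := by
    refine Continuous.integrable_of_hasCompactSupport ?_ hc.mul_left
    unfold gl; fun_prop
  have hI2 : 0 ≤ ∫ x, (-c * gl β p x * η x + F x) := by
    have : (fun x => -c * gl β p x * η x + F x) = fun x => (-c) * (gl β p x * η x) + F x := by
      ext x; ring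
    rw [this, integral_add (hi2.const_mul _) hF, integral_const_mul]
    unfold gl
    linarith
  have hle : ∀ x, -c * gl β p x * η x + F x ≤ 0 := by
    intro x
    rcases (hη0 x).eq_or_lt with h | h
    · rw [← h]; simpa using h2 x h.symm
    · exact (h1 x h).le
  have hintg : Integrable (fun x => -(-c * gl β p x * η x + F x)) := by
    have := ((hi2.const_mul (-c)).add hF).neg
    refine this.congr (ae_of_all _ fun x => ?_)
    simp; ring
  have h0 : ∫ x, -(-c * gl β p x * η x + F x) = 0 := by
    apply le_antisymm
    · rw [integral_neg]; linarith
    · exact integral_nonneg fun x => by simpa using hle x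
  rw [integral_eq_zero_iff_of_nonneg (fun x => by simpa using hle x) hintg] at h0
  refine eq_zero_of_ae_zero hηc ?_
  filter_upwards [h0] with x hx
  by_contra hne
  have := h1 x (lt_of_le_of_ne (hη0 x) (Ne.symm hne))
  simp at hx
  linarith

theorem zero_of_grad_zero (hn : 0 < n) {η : Eu n → ℝ} (hη : IsLip η) {r : ℝ} (hr : ∀ x, r ≤ ‖x‖ → η x = 0)
    (hη0 : ∀ x, 0 ≤ η x) (hg : ∀ᵐ x, gradient η x = 0) : ∀ x, η x = 0 := by
  have hn' : (0 : ℝ) < n := by exact_mod_cast hn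
  refine core (F := fun _ => 0) hη (hasCompactSupport_of_off hr) hη0 (integrable_zero _ _ _)
    (n / (2 * (r ^ 2 + 1))) (-1) 0 ?_ ?_ (by simp)
  · rw [integral_congr_ae (g := fun _ => (0:ℝ))]
    · simp
    · filter_upwards [hg] with x hx
      rw [hx]; simp
  · intro x hx
    have hxr : ‖x‖ < r := by
      by_contra h
      exact hx.ne' (hr x (not_lt.1 h))
    set β : ℝ := n / (2 * (r ^ 2 + 1)) with hβ
    have hβ0 : 0 < β := by positivity
    have hβ1 : 2 * β * (r ^ 2 + 1) = n := by rw [hβ]; field_simp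
    have : gl β 0 x < 0 := by
      unfold gl
      refine mul_neg_of_pos_of_neg (ga_pos _ _ _) ?_
      have h3 : ‖x - 0‖ ^ 2 < r ^ 2 + 1 := by
        rw [sub_zero]; nlinarith [norm_nonneg x]
      have : 4 * β ^ 2 * ‖x - 0‖ ^ 2 < 2 * β * n := by
        rw [← hβ1]
        nlinarith [mul_pos hβ0 hβ0]
      linarith
    nlinarith

theorem ga_lip {β : ℝ} (hβ : 0 ≤ β) (p : Eu n) : LipschitzWith (Real.toNNReal (Real.sqrt β)) (ga β p) := by
  refine lipschitzWith_of_nnnorm_fderiv_le (𝕜 := ℝ) ((ga_contDiff β p).differentiable (by norm_num)) fun x => ?_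
  rw [← NNReal.coe_le_coe, coe_nnnorm, ← norm_gradient_eq, ga_gradient, norm_smul, Real.coe_toNNReal _ (Real.sqrt_nonneg _)]
  set t := ‖x - p‖
  have ht : 0 ≤ t := norm_nonneg _
  have hg := ga_pos β p x
  rw [Real.norm_eq_abs, abs_mul, abs_of_pos hg, abs_mul, abs_of_nonneg hβ]
  norm_num
  have h1 : ga β p x * (1 + β * t ^ 2) ≤ 1 := by
    have := Real.add_one_le_exp (β * t ^ 2)
    have h2 : ga β p x * Real.exp (β * t ^ 2) = 1 := by
      unfold ga; rw [← Real.exp_add]; simp [t]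
    nlinarith
  have hs := Real.sq_sqrt hβ
  set s := Real.sqrt β
  have hs0 : 0 ≤ s := Real.sqrt_nonneg _
  rw [← hs] at h1 ⊢
  have : 2 * s * t ≤ 1 + s ^ 2 * t ^ 2 := by nlinarith [sq_nonneg (s * t - 1)]
  calc 2 * s ^ 2 * ga _ p x * t = s * (ga _ p x * (2 * s * t)) := by ring
    _ ≤ s * (ga _ p x * (1 + s ^ 2 * t ^ 2)) := by
        have := (ga_pos (s ^ 2) p x).le
        gcongr
    _ ≤ s * 1 := by gcongr
    _ = s := mul_one s

/-- affine Gaussian -/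
noncomputable def gP (A B β : ℝ) (p x : Eu n) : ℝ := A * ga β p x + B

theorem gP_lip (A B : ℝ) {β : ℝ} (hβ : 0 ≤ β) (p : Eu n) :
    LipschitzWith (Real.toNNReal (|A| * Real.sqrt β)) (gP A B β p) := by
  have h := (lipschitzWith_smul A (β := ℝ)).comp (ga_lip hβ p)
  refine LipschitzWith.of_dist_le_mul fun x y => ?_
  have h1 := h.dist_le_mul x y
  have h2 : dist (gP A B β p x) (gP A B β p y) = dist (A • ga β p x) (A • ga β p y) := by
    simp [gP]
  rw [h2]
  refine h1.trans_eq ?_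
  push_cast
  rw [Real.coe_toNNReal _ (by positivity), Real.coe_toNNReal _ (by positivity)]
  simp

theorem gP_grad (A B β : ℝ) (p x : Eu n) :
    gradient (gP A B β p) x = A • gradient (ga β p) x := by
  have h := ((ga_contDiff β p).differentiable (by norm_num) x)
  have := gradient_add (h.const_mul A) (differentiableAt_const B)
  unfold gP
  rw [this, gradient_const_mul A h]
  simp [gradient]

theorem gP_grad_norm (A B : ℝ) {β : ℝ} (hβ : 0 ≤ β) (p x : Eu n) :
    ‖gradient (gP A B β p) x‖ = |A| * (2 * β * ga β p x * ‖x - p‖) := by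
  rw [gP_grad, ga_gradient, norm_smul, norm_smul, Real.norm_eq_abs, Real.norm_eq_abs, abs_mul,
    abs_of_pos (ga_pos β p x), abs_mul, abs_of_nonneg hβ]
  norm_num

theorem cmp_lower {u : Eu n → ℝ} (hu : IsLip u) (hu0 : ∀ x, 0 ≤ u x) {A B β r : ℝ} {p : Eu n} (hβ : 0 ≤ β)
    (hr : ∀ x, r ≤ ‖x‖ → gP A B β p x ≤ u x)
    (hEX : 0 ≤ EX (fun x => max (u x) (gP A B β p x)) u)
    (hlap : ∀ x, u x < gP A B β p x → 0 < A * gl β p x)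
    (hgr : ∀ᵐ x, u x = 0 → u x < gP A B β p x → 1 ≤ ‖gradient (gP A B β p) x‖) :
    ∀ x, gP A B β p x ≤ u x := by
  set P := gP A B β p with hP
  have hPl : IsLip P := ⟨_, gP_lip A B hβ p⟩
  have hη : IsLip (fun x => max (P x - u x) 0) := (hPl.sub hu).max (isLip_const 0)
  have hoff : ∀ x, r ≤ ‖x‖ → max (P x - u x) 0 = 0 := fun x hx => by
    have := hr x hx; apply max_eq_right; linarith
  have hcs := hasCompactSupport_of_off hoff
  have hEq : EqOff r (fun x => max (u x) (P x)) u := fun x hx => max_eq_left (hr x hx)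
  have hz : ∀ x, max (P x - u x) 0 = 0 := by
    refine core (F := fun _ => 0) hη hcs (fun x => le_max_right _ _) (integrable_zero _ _ _) β (2 * A) p ?_ ?_ (by simp)
    · refine hEX.trans ?_
      unfold EX
      refine integral_mono_ae (integrable_dens_sub (hu.max hPl) hu hEq) ?_ ?_
      · have := ((ga_ibp β p hη hcs).1).const_mul (2 * A)
        simp_rw [ga_gradient]
        simpa using this
      · filter_upwards [ae_dens_eq (hu.max hPl) hu, ae_dens_eq (hu.max hPl) hPl, ae_grad_zero hη, ae_grad_zero hu,
          ae_grad_eq hη (hPl.sub hu), hPl.ae_diff, hu.ae_diff, hgr] with x a1 a2 a3 a4 a5 a6 a7 a8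
        rcases le_or_gt (P x) (u x) with h | h
        · rw [a1 (max_eq_left h), a3 (max_eq_right (by linarith))]; simp
        · rw [a2 (max_eq_right h.le), a5 (max_eq_left (by linarith)), gradient_sub a6 a7]
          have hg : 2 * A * inner ℝ (gradient (ga β p) x) (gradient P x - gradient u x) =
              2 * inner ℝ (gradient P x) (gradient P x - gradient u x) := by
            rw [hP, gP_grad A B β p x, inner_smul_left]; simp; ring
          rw [hg, inner_sub_right, real_inner_self_eq_norm_sq]
          have hPpos : 0 < P x := (hu0 x).trans_lt h
          unfold dens
          rcases (hu0 x).eq_or_lt with h0 | h0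
          · rw [a4 h0.symm, ← h0]
            have := a8 h0.symm h
            simp [hPpos]
            nlinarith
          · have := norm_sub_sq_real (gradient P x) (gradient u x)
            rw [if_pos hPpos, if_pos h0]
            nlinarith [sq_nonneg ‖gradient P x - gradient u x‖]
    · intro x hx
      have h1 : u x < P x := by
        by_contra h
        rw [max_eq_right (by linarith)] at hx
        exact lt_irrefl _ hx
      have := hlap x h1
      have := mul_pos this hx
      nlinarith
  intro x
  have := (le_max_left (P x - u x) 0).trans_eq (hz x)
  linarith

theorem cmp_upper {u v : Eu n → ℝ} (hu : IsLip u) (hv : IsLip v) (hu0 : ∀ x, 0 ≤ u x) (hvu : ∀ x, v x ≤ u x)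
    {A B β r : ℝ} {p : Eu n} (hβ : 0 ≤ β)
    (hr : ∀ x, r ≤ ‖x‖ → v x = u x)
    (hEX : 0 ≤ EX v u)
    (hvQ : ∀ x, v x < u x → v x = max (gP A B β p x) 0)
    (hlap : ∀ x, v x < u x → 0 < gP A B β p x → A * gl β p x < 0)
    (hgr : ∀ x, v x < u x → gP A B β p x ≤ 0 → 2 * (A * gl β p x) * u x < 1 - ‖gradient (gP A B β p) x‖ ^ 2) :
    ∀ x, v x = u x := by
  classical
  set Q := gP A B β p with hQ
  have hQl : IsLip Q := ⟨_, gP_lip A B hβ p⟩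
  have hη : IsLip (fun x => u x - v x) := hu.sub hv
  have hoff : ∀ x, r ≤ ‖x‖ → u x - v x = 0 := fun x hx => by rw [hr x hx, sub_self]
  have hcs := hasCompactSupport_of_off hoff
  set F : Eu n → ℝ := fun x => if v x < u x ∧ Q x ≤ 0 then -(1 - ‖gradient Q x‖ ^ 2) else 0 with hF
  have hFi : Integrable F := by
    refine integrable_of_bdd_supp (M := 1 + (Real.toNNReal (|A| * Real.sqrt β) : ℝ) ^ 2) (r := r) ?_ ?_ ?_
    · refine Measurable.ite ?_ ?_ measurable_const
      · exact (measurableSet_lt hv.continuous.measurable hu.continuous.measurable).inter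
          (measurableSet_le hQl.continuous.measurable measurable_const)
      · exact (measurable_const.sub ((measurable_gradient Q).norm.pow_const 2)).neg
    · intro x
      have h1 := norm_gradient_le (gP_lip A B hβ p) x
      have h2 : ‖gradient Q x‖ ^ 2 ≤ (Real.toNNReal (|A| * Real.sqrt β) : ℝ) ^ 2 := by
        gcongr
      simp only [hF]
      split_ifs
      · rw [abs_le]; constructor <;> nlinarith [sq_nonneg ‖gradient Q x‖]
      · rw [abs_zero]; positivity
    · intro x hx
      simp [hF, hr x hx]
  have hz : ∀ x, u x - v x = 0 := by
    refine core (F := F) hη hcs (fun x => sub_nonneg.2 (hvu x)) hFi β (-2 * A) p ?_ ?_ ?_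
    · refine hEX.trans ?_
      unfold EX
      refine integral_mono_ae (integrable_dens_sub hv hu hr) ?_ ?_
      · have := ((ga_ibp β p hη hcs).1).const_mul (-2 * A)
        simp_rw [ga_gradient]
        exact this.add hFi
      · filter_upwards [ae_dens_eq hv hu, ae_dens_eq hv hQl, ae_grad_eq hv hQl, ae_grad_zero hη, ae_grad_zero hv,
          hu.ae_diff, hv.ae_diff] with x a1 a2 a22 a3 a4 a6 a7
        rcases (hvu x).eq_or_lt with h | h
        · rw [a1 h, a3 (by linarith)]; simp [hF, h]
        · rw [gradient_sub a6 a7]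
          have hg : -2 * A * inner ℝ (gradient (ga β p) x) (gradient u x - gradient v x) =
              -2 * inner ℝ (gradient Q x) (gradient u x - gradient v x) := by
            rw [hQ, gP_grad A B β p x, inner_smul_left]; simp; ring
          rw [hg, inner_sub_right]
          rcases le_or_gt (Q x) 0 with hQx | hQx
          · have hv0 : v x = 0 := by rw [hvQ x h, max_eq_right hQx]
            have hu1 : 0 < u x := by linarith
            simp only [dens, hF]
            have i1 : ¬ 0 < v x := by linarith
            rw [if_pos (show v x < u x ∧ Q x ≤ 0 from ⟨h, hQx⟩), a4 hv0, inner_zero_right, if_pos hu1, if_neg i1]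
            have := norm_sub_sq_real (gradient Q x) (gradient u x)
            rw [norm_zero]
            nlinarith [sq_nonneg ‖gradient Q x - gradient u x‖]
          · have hv0 : v x = Q x := by rw [hvQ x h, max_eq_left hQx.le]
            have hu1 : 0 < u x := by linarith
            rw [a2 hv0, a22 hv0]
            simp only [dens, hF]
            rw [if_pos hQx, if_pos hu1, if_neg (by intro hh; linarith [hh.2]), real_inner_self_eq_norm_sq]
            have := norm_sub_sq_real (gradient Q x) (gradient u x)
            nlinarith [sq_nonneg ‖gradient Q x - gradient u x‖]
    · intro x hx
      have h : v x < u x := by linarith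
      simp only [hF]
      rcases le_or_gt (Q x) 0 with hQx | hQx
      · have hv0 : v x = 0 := by rw [hvQ x h, max_eq_right hQx]
        have := hgr x h hQx
        rw [if_pos ⟨h, hQx⟩, hv0]
        linarith
      · rw [if_neg (by intro hh; linarith [hh.2])]
        have := hlap x h hQx
        nlinarith
    · intro x hx
      simp only [hF]
      rw [if_neg (by intro hh; linarith [hh.1])]
  intro x
  linarith [hz x]

end ACF

namespace ACF
open Topology
variable {n : ℕ}

/-- locally uniform convergence -/
def LU (f : ℕ → Eu n → ℝ) (g : Eu n → ℝ) : Prop :=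
  ∀ r : ℝ, ∀ ε : ℝ, 0 < ε → ∀ᶠ k in atTop, ∀ x, ‖x‖ ≤ r → |f k x - g x| ≤ ε

theorem LU.tendsto {f : ℕ → Eu n → ℝ} {g : Eu n → ℝ} (h : LU f g) (x : Eu n) :
    Tendsto (fun k => f k x) atTop (𝓝 (g x)) := by
  rw [Metric.tendsto_atTop']
  intro ε hε
  obtain ⟨N, hN⟩ := eventually_atTop.1 (h ‖x‖ (ε / 2) (by linarith))
  refine ⟨N, fun k hk => ?_⟩
  rw [Real.dist_eq]
  linarith [hN k hk.le x le_rfl]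

theorem lu_of_pointwise {f : ℕ → Eu n → ℝ} {g : Eu n → ℝ} {K : ℝ≥0} (hf : ∀ k, LipschitzWith K (f k))
    (hg : LipschitzWith K g) (h : ∀ x, Tendsto (fun k => f k x) atTop (𝓝 (g x))) : LU f g := by
  intro r ε hε
  set δ : ℝ := ε / (3 * (K + 1)) with hδ
  have hδ0 : 0 < δ := by positivity
  obtain ⟨t, ht, htf, htc⟩ := finite_cover_balls_of_compact (isCompact_closedBall (0 : Eu n) r) hδ0
  have h1 : ∀ᶠ k in atTop, ∀ y ∈ t, |f k y - g y| ≤ ε / 3 := by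
    rw [eventually_all_finite htf]
    intro y _
    have := (Metric.tendsto_nhds.1 (h y)) (ε / 3) (by linarith)
    filter_upwards [this] with k hk
    rw [Real.dist_eq] at hk
    exact hk.le
  filter_upwards [h1] with k hk x hx
  have hx' : x ∈ closedBall (0 : Eu n) r := by simpa using hx
  obtain ⟨y, hy, hxy⟩ := mem_iUnion₂.1 (htc hx')
  have hd : dist x y < δ := hxy
  have hKδ : K * dist x y ≤ ε / 3 := by
    have : (K : ℝ) * dist x y ≤ (K + 1) * δ := by gcongr; linarith
    refine this.trans_eq ?_
    rw [hδ]; field_simp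
  have a1 := (hf k).dist_le_mul x y
  have a2 := hg.dist_le_mul x y
  have a3 := hk y hy
  rw [Real.dist_eq] at a1 a2
  have a4 := a1.trans hKδ
  have a5 := a2.trans hKδ
  rw [abs_le] at *
  constructor <;> linarith [a3.1, a3.2, a4.1, a4.2, a5.1, a5.2]

theorem lip_of_tendsto {f : ℕ → Eu n → ℝ} {g : Eu n → ℝ} {K : ℝ≥0} (hf : ∀ k, LipschitzWith K (f k))
    (h : ∀ x, Tendsto (fun k => f k x) atTop (𝓝 (g x))) : LipschitzWith K g := by
  refine LipschitzWith.of_dist_le_mul fun x y => ?_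
  exact le_of_tendsto ((h x).dist (h y)) (Eventually.of_forall fun k => (hf k).dist_le_mul x y)

theorem arzela {f : ℕ → Eu n → ℝ} {K : ℝ≥0} (hf : ∀ k, LipschitzWith K (f k)) {M : ℝ}
    (hM : ∀ k, |f k 0| ≤ M) :
    ∃ (φ : ℕ → ℕ) (g : Eu n → ℝ), StrictMono φ ∧ LipschitzWith K g ∧ LU (fun k => f (φ k)) g := by
  set q := TopologicalSpace.denseSeq (Eu n)
  have hcomp : IsCompact (Set.pi univ fun i => Icc (-(M + K * ‖q i‖)) (M + K * ‖q i‖)) :=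
    isCompact_univ_pi fun i => isCompact_Icc
  have hmem : ∀ k, (fun i => f k (q i)) ∈ Set.pi univ fun i => Icc (-(M + K * ‖q i‖)) (M + K * ‖q i‖) := by
    intro k i _
    have h1 := (hf k).dist_le_mul (q i) 0
    have h2 := hM k
    rw [Real.dist_eq, dist_zero_right] at h1
    rw [abs_le] at h1 h2
    constructor <;> simp only <;> linarith [h1.1, h1.2, h2.1, h2.2]
  obtain ⟨a, _, φ, hφ, ha⟩ := hcomp.tendsto_subseq hmem
  rw [tendsto_pi_nhds] at ha
  have hcau : ∀ x, CauchySeq (fun k => f (φ k) x) := by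
    intro x
    rw [Metric.cauchySeq_iff']
    intro ε hε
    obtain ⟨y, hy⟩ := (TopologicalSpace.denseRange_denseSeq (Eu n)).exists_dist_lt x
      (show 0 < ε / (4 * (K + 1)) by positivity)
    have hKδ : K * dist x (q y) ≤ ε / 4 := by
      have : (K : ℝ) * dist x (q y) ≤ (K + 1) * (ε / (4 * (K + 1))) := by gcongr; linarith
      refine this.trans_eq ?_
      field_simp
    have h1 : CauchySeq (fun k => f (φ k) (q y)) := (ha y).cauchySeq
    rw [Metric.cauchySeq_iff'] at h1
    obtain ⟨N, hN⟩ := h1 (ε / 4) (by linarith)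
    refine ⟨N, fun k hk => ?_⟩
    have a1 := (hf (φ k)).dist_le_mul x (q y)
    have a2 := (hf (φ N)).dist_le_mul x (q y)
    have a3 := hN k hk
    rw [Real.dist_eq] at *
    have a4 := a1.trans hKδ
    have a5 := a2.trans hKδ
    rw [abs_le] at a4 a5
    rw [abs_lt] at *
    constructor <;> linarith [a3.1, a3.2, a4.1, a4.2, a5.1, a5.2]
  choose g hg using fun x => cauchySeq_tendsto_of_complete (hcau x)
  have hgl := lip_of_tendsto (fun k => hf (φ k)) hg
  exact ⟨φ, g, hφ, hgl, lu_of_pointwise (fun k => hf (φ k)) hgl hg⟩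

theorem weak_conv {φ : Eu n → ℝ} (hφ : Integrable φ) {g : ℕ → Eu n → ℝ} {K : ℝ≥0}
    (hg : ∀ k, LipschitzWith K (g k)) (h0 : LU g (fun _ => 0)) (e : Eu n) :
    Tendsto (fun k => ∫ x, φ x * fderiv ℝ (g k) x e) atTop (𝓝 0) := by
  rw [Metric.tendsto_atTop']
  intro ε hε
  have hb : ∀ k x, |fderiv ℝ (g k) x e| ≤ K * ‖e‖ := by
    intro k x
    refine ((fderiv ℝ (g k) x).le_opNorm e).trans ?_
    gcongr
    exact norm_fderiv_le_of_lipschitz ℝ (hg k)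
  have hε1 : 0 < ε / (4 * (K * ‖e‖ + 1)) := by positivity
  obtain ⟨ψ, hψc, hψs, hψ⟩ := (memLp_one_iff_integrable.2 hφ).exist_eLpNorm_sub_le (p := 1) (by norm_num) le_rfl hε1
  have hψi : Integrable ψ := hψs.continuous.integrable_of_hasCompactSupport hψc
  have hsub : Integrable (fun x => φ x - ψ x) := hφ.sub hψi
  have hψ1 : ∫ x, |φ x - ψ x| ≤ ε / (4 * (K * ‖e‖ + 1)) := by
    rw [eLpNorm_one_eq_lintegral_enorm] at hψ
    have := integral_norm_eq_lintegral_enorm (hφ.sub hψi).aestronglyMeasurable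
    simp only [Pi.sub_apply, Real.norm_eq_abs] at this
    rw [this]
    exact ENNReal.toReal_le_of_le_ofReal hε1.le hψ
  obtain ⟨C, hC⟩ := hψs.lipschitzWith_of_hasCompactSupport hψc (by simp)
  obtain ⟨R, hR⟩ := hψc.isCompact.isBounded.subset_ball (0 : Eu n)
  have hlz : ∀ x, R ≤ ‖x‖ → lineDeriv ℝ ψ x (-e) = 0 := by
    intro x hx
    rw [(hψs.differentiable (by simp) x).lineDeriv_eq_fderiv]
    have : fderiv ℝ ψ x = 0 := by
      by_contra h
      have := hR (support_fderiv_subset ℝ h)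
      simp at this; linarith
    rw [this]; simp
  have hlb : ∀ x, |lineDeriv ℝ ψ x (-e)| ≤ C * ‖e‖ := by
    intro x
    have := norm_lineDeriv_le_of_lipschitz (𝕜 := ℝ) (x₀ := x) (v := -e) hC
    simpa using this
  have hlm : Measurable (fun x => lineDeriv ℝ ψ x (-e)) := measurable_lineDeriv hψs.continuous
  have hli : Integrable (fun x => |lineDeriv ℝ ψ x (-e)|) := by
    refine integrable_of_bdd_supp (M := C * ‖e‖) (r := R) hlm.norm ?_ ?_
    · intro x; rw [abs_abs]; exact hlb x
    · intro x hx; rw [hlz x hx, abs_zero]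
  set I := ∫ x, |lineDeriv ℝ ψ x (-e)|
  have hI : 0 ≤ I := integral_nonneg fun x => abs_nonneg _
  obtain ⟨N, hN⟩ := eventually_atTop.1 (h0 R (ε / (4 * (I + 1))) (by positivity))
  refine ⟨N, fun k hk => ?_⟩
  have hfm : Measurable (fun x => fderiv ℝ (g k) x e) := measurable_fderiv_apply_const ℝ (g k) e
  have hbd : ∀ {f : Eu n → ℝ}, Integrable f → Integrable (fun x => f x * fderiv ℝ (g k) x e) := by
    intro f hf
    exact hf.mul_bdd (c := K * ‖e‖) hfm.aestronglyMeasurable (ae_of_all _ fun x => hb k x)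
  have e1 : ∫ x, φ x * fderiv ℝ (g k) x e = (∫ x, (φ x - ψ x) * fderiv ℝ (g k) x e) + ∫ x, ψ x * fderiv ℝ (g k) x e := by
    rw [← integral_add (hbd hsub) (hbd hψi)]
    congr 1; ext x; ring
  have e2 : ∫ x, ψ x * fderiv ℝ (g k) x e = ∫ x, lineDeriv ℝ ψ x (-e) * g k x := by
    rw [← LipschitzWith.integral_lineDeriv_mul_eq (μ := volume) (hg k) hC hψc e]
    apply integral_congr_ae
    filter_upwards [(hg k).ae_differentiableAt] with x hx
    rw [hx.lineDeriv_eq_fderiv]; ring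
  have e3 : |∫ x, (φ x - ψ x) * fderiv ℝ (g k) x e| ≤ ε / 4 := by
    have : |∫ x, (φ x - ψ x) * fderiv ℝ (g k) x e| ≤ ∫ x, |φ x - ψ x| * (K * ‖e‖) := by
      rw [← Real.norm_eq_abs]
      refine (norm_integral_le_of_norm_le ((hsub.norm).mul_const _) (ae_of_all _ fun x => ?_))
      rw [norm_mul]
      exact mul_le_mul_of_nonneg_left (hb k x) (norm_nonneg _)
    rw [integral_mul_const] at this
    refine this.trans ?_
    calc _ ≤ ε / (4 * (K * ‖e‖ + 1)) * (K * ‖e‖ + 1) := by gcongr; linarith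
      _ = ε / 4 := by field_simp
  have e4 : |∫ x, lineDeriv ℝ ψ x (-e) * g k x| ≤ ε / 4 := by
    have : |∫ x, lineDeriv ℝ ψ x (-e) * g k x| ≤ ∫ x, |lineDeriv ℝ ψ x (-e)| * (ε / (4 * (I + 1))) := by
      rw [← Real.norm_eq_abs]
      refine (norm_integral_le_of_norm_le (hli.mul_const _) (ae_of_all _ fun x => ?_))
      rw [norm_mul, Real.norm_eq_abs, Real.norm_eq_abs]
      by_cases hx : R ≤ ‖x‖
      · rw [hlz x hx]; simp
      · have := hN k hk.le x (by linarith)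
        rw [sub_zero] at this
        gcongr
    rw [integral_mul_const] at this
    refine this.trans ?_
    calc _ ≤ (I + 1) * (ε / (4 * (I + 1))) := by gcongr; linarith
      _ = ε / 4 := by field_simp
  rw [Real.dist_eq, sub_zero, e1, e2]
  refine (abs_add_le _ _).trans_lt ?_
  linarith

theorem lsc {f : ℕ → Eu n → ℝ} {g : Eu n → ℝ} {K : ℝ≥0} (hf : ∀ k, LipschitzWith K (f k))
    (hg : LipschitzWith K g) (h : LU f g) (r : ℝ) {δ : ℝ} (hδ : 0 < δ) :
    ∀ᶠ k in atTop, ∫ x in ball 0 r, dens g x ≤ (∫ x in ball 0 r, dens (f k) x) + δ := by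
  classical
  have hgL : IsLip g := ⟨K, hg⟩
  have hfL : ∀ k, IsLip (f k) := fun k => ⟨K, hf k⟩
  set φ : Fin n → Eu n → ℝ := fun i x => (ball (0 : Eu n) r).indicator (fun x => fderiv ℝ g x (EuclideanSpace.single i 1)) x
  have hφ : ∀ i, Integrable (φ i) := by
    intro i
    refine integrable_of_bdd_supp (M := K) (r := r) ?_ ?_ ?_
    · exact (measurable_fderiv_apply_const ℝ g _).indicator measurableSet_ball
    · intro x
      simp only [φ]
      by_cases hx : x ∈ ball (0 : Eu n) r
      · rw [indicator_of_mem hx]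
        refine ((fderiv ℝ g x).le_opNorm _).trans ?_
        simp
        exact norm_fderiv_le_of_lipschitz ℝ hg
      · rw [indicator_of_notMem hx]; simp
    · intro x hx
      simp only [φ]
      rw [indicator_of_notMem]; simpa using hx
  have hd : ∀ k, LipschitzWith (K + K) (fun x => f k x - g x) := fun k => (hf k).sub hg
  have hd0 : LU (fun k x => f k x - g x) (fun _ => 0) := by
    intro r ε hε
    filter_upwards [h r ε hε] with k hk x hx
    simpa using hk x hx
  have hw := fun i => weak_conv (hφ i) hd hd0 (EuclideanSpace.single i 1)
  have hw1 : Tendsto (fun k => 2 * ∑ i, ∫ x, φ i x * fderiv ℝ (fun x => f k x - g x) x (EuclideanSpace.single i 1)) atTop (𝓝 0) := by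
    have := (tendsto_finsetSum Finset.univ fun i _ => hw i).const_mul 2
    simpa using this
  have hw2 : Tendsto (fun k => ∫ x in ball (0 : Eu n) r, if 0 < g x ∧ f k x ≤ 0 then (-1 : ℝ) else 0) atTop (𝓝 0) := by
    have := tendsto_integral_of_dominated_convergence (μ := volume.restrict (ball (0 : Eu n) r))
      (F := fun k x => if 0 < g x ∧ f k x ≤ 0 then (-1 : ℝ) else 0) (f := fun _ => 0) (fun _ => 1) ?_ ?_ ?_ ?_
    · simpa using this
    · intro k
      refine (Measurable.ite ?_ measurable_const measurable_const).aestronglyMeasurable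
      exact (measurableSet_lt measurable_const hg.continuous.measurable).inter (measurableSet_le (hf k).continuous.measurable measurable_const)
    · exact integrableOn_const measure_ball_lt_top.ne
    · intro k
      refine ae_of_all _ fun x => ?_
      split_ifs <;> simp
    · refine ae_of_all _ fun x => ?_
      refine tendsto_const_nhds.congr' ?_
      by_cases hx : 0 < g x
      · filter_upwards [(h.tendsto x).eventually_const_lt hx] with k hk
        rw [if_neg]; rintro ⟨_, h2⟩; linarith
      · filter_upwards with k
        rw [if_neg]; rintro ⟨h2, _⟩; exact hx h2
  have hsum := hw1.add hw2
  rw [add_zero] at hsum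
  filter_upwards [hsum.eventually_const_lt (show -δ < 0 by linarith)] with k hk
  have hi1 : ∀ i, Integrable (fun x => φ i x * fderiv ℝ (fun x => f k x - g x) x (EuclideanSpace.single i 1)) := by
    intro i
    refine (hφ i).mul_bdd (c := (K + K : ℝ≥0)) (measurable_fderiv_apply_const ℝ _ _).aestronglyMeasurable (ae_of_all _ fun x => ?_)
    refine ((fderiv ℝ _ x).le_opNorm _).trans ?_
    rw [show ‖(EuclideanSpace.single i 1 : Eu n)‖ = 1 by simp, mul_one]
    exact norm_fderiv_le_of_lipschitz ℝ (hd k)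
  have hi2 : IntegrableOn (fun x => if 0 < g x ∧ f k x ≤ 0 then (-1 : ℝ) else 0) (ball (0 : Eu n) r) := by
    refine Measure.integrableOn_of_bounded (M := 1) measure_ball_lt_top.ne ?_ ?_
    · refine (Measurable.ite ?_ measurable_const measurable_const).aestronglyMeasurable
      exact (measurableSet_lt measurable_const hg.continuous.measurable).inter (measurableSet_le (hf k).continuous.measurable measurable_const)
    · refine ae_of_all _ fun x => ?_
      split_ifs <;> simp
  have hi3 : IntegrableOn (fun x => 2 * ∑ i, φ i x * fderiv ℝ (fun x => f k x - g x) x (EuclideanSpace.single i 1)) (ball (0 : Eu n) r) :=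
    ((integrable_finsetSum _ fun i _ => hi1 i).const_mul 2).integrableOn
  have e1 : 2 * ∑ i, ∫ x, φ i x * fderiv ℝ (fun x => f k x - g x) x (EuclideanSpace.single i 1)
      = ∫ x in ball (0 : Eu n) r, 2 * ∑ i, φ i x * fderiv ℝ (fun x => f k x - g x) x (EuclideanSpace.single i 1) := by
    rw [integral_const_mul, setIntegral_eq_integral_of_forall_compl_eq_zero, integral_finsetSum _ fun i _ => hi1 i]
    intro x hx
    refine Finset.sum_eq_zero fun i _ => ?_
    simp only [φ]
    rw [indicator_of_notMem hx, zero_mul]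
  have e2 : (∫ x in ball (0 : Eu n) r, dens g x) + ((∫ x in ball (0 : Eu n) r, 2 * ∑ i, φ i x * fderiv ℝ (fun x => f k x - g x) x (EuclideanSpace.single i 1)) + ∫ x in ball (0 : Eu n) r, if 0 < g x ∧ f k x ≤ 0 then (-1 : ℝ) else 0) ≤ ∫ x in ball (0 : Eu n) r, dens (f k) x := by
    have hi4 : IntegrableOn (fun x => 2 * ∑ i, φ i x * fderiv ℝ (fun x => f k x - g x) x (EuclideanSpace.single i 1) + if 0 < g x ∧ f k x ≤ 0 then (-1 : ℝ) else 0) (ball (0 : Eu n) r) := hi3.add hi2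
    have hi5 := (integrableOn_dens hgL r).add hi4
    rw [← integral_add hi3 hi2, ← integral_add (integrableOn_dens hgL r) hi4]
    refine setIntegral_mono_on_ae hi5 (integrableOn_dens (hfL k) r) measurableSet_ball ?_
    filter_upwards [hgL.ae_diff, (hfL k).ae_diff] with x h1 h2 hx
    have e3 : ∑ i, φ i x * fderiv ℝ (fun x => f k x - g x) x (EuclideanSpace.single i 1) =
        inner ℝ (gradient g x) (gradient (f k) x - gradient g x) := by
      rw [← gradient_sub h2 h1, PiLp.inner_apply]
      refine Finset.sum_congr rfl fun i _ => ?_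
      simp only [φ]
      rw [indicator_of_mem hx, ← inner_gradient_left, ← inner_gradient_left, EuclideanSpace.inner_single_right, EuclideanSpace.inner_single_right]
      simp; ring
    rw [e3, inner_sub_right, real_inner_self_eq_norm_sq]
    have e4 := norm_sub_sq_real (gradient g x) (gradient (f k) x)
    have e5 : (if 0 < g x then (1:ℝ) else 0) + (if 0 < g x ∧ f k x ≤ 0 then (-1 : ℝ) else 0) ≤ if 0 < f k x then 1 else 0 := by
      by_cases c1 : 0 < g x <;> by_cases c2 : 0 < f k x
      · have : ¬ f k x ≤ 0 := not_le.2 c2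
        simp [c1, c2, this]
      · have : f k x ≤ 0 := not_lt.1 c2
        simp [c1, c2, this]
      · simp [c1, c2]
      · simp [c1, c2]
    unfold dens
    nlinarith [sq_nonneg ‖gradient g x - gradient (f k) x‖]
  rw [e1] at hk
  linarith

end ACF

namespace ACF
open Topology
variable {n : ℕ}

/-- translation -/
theorem dens_translate (u : Eu n → ℝ) (h x : Eu n) : dens (fun y => u (y + h)) x = dens u (x + h) := by
  unfold dens gradient
  rw [fderiv_comp_add_right]

theorem EX_translate (u v : Eu n → ℝ) (h : Eu n) :
    EX (fun y => u (y + h)) (fun y => v (y + h)) = EX u v := by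
  unfold EX
  simp_rw [dens_translate]
  exact integral_add_right_eq_self (fun x => dens u x - dens v x) h

theorem LipT {u : Eu n → ℝ} {K : ℝ≥0} (hu : LipschitzWith K u) (h : Eu n) : LipschitzWith K (fun y => u (y + h)) := by
  refine LipschitzWith.of_dist_le_mul fun x y => ?_
  have := hu.dist_le_mul (x + h) (y + h)
  rwa [dist_add_right] at this

theorem LipAvg {u w : Eu n → ℝ} {K : ℝ≥0} (hu : LipschitzWith K u) (hw : LipschitzWith K w) (c : ℝ) :
    LipschitzWith K (fun y => (u y + w y + c) / 2) := by
  refine LipschitzWith.of_dist_le_mul fun x y => ?_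
  have h1 := hu.dist_le_mul x y
  have h2 := hw.dist_le_mul x y
  rw [Real.dist_eq, abs_le] at *
  constructor <;> linarith [h1.1, h1.2, h2.1, h2.2]

def Cls (K : ℝ≥0) (lo hi v : Eu n → ℝ) : Prop := LipschitzWith K v ∧ ∀ x, lo x ≤ v x ∧ v x ≤ hi x

def ClsMin (K : ℝ≥0) (lo hi u : Eu n → ℝ) : Prop := Cls K lo hi u ∧ ∀ v, Cls K lo hi v → 0 ≤ EX v u

theorem Cls.lip {K : ℝ≥0} {lo hi v : Eu n → ℝ} (h : Cls K lo hi v) : IsLip v := ⟨K, h.1⟩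

theorem Cls.eqOff {K K' : ℝ≥0} {lo hi v u : Eu n → ℝ} (heq : EqOff 1 lo hi) (h : Cls K lo hi v) (h' : Cls K' lo hi u) :
    EqOff 1 v u := by
  intro x hx
  have := heq x hx
  have h1 := h.2 x
  have h2 := h'.2 x
  linarith [h1.1, h1.2, h2.1, h2.2]

theorem exists_clsMin {K : ℝ≥0} {lo hi : Eu n → ℝ} (hlo : LipschitzWith K lo) (hle : ∀ x, lo x ≤ hi x)
    (heq : EqOff 1 lo hi) : ∃ u, ClsMin K lo hi u := by
  set S : Set ℝ := (fun v : Eu n → ℝ => ∫ x in ball 0 1, dens v x) '' {v | Cls K lo hi v} with hS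
  have hne : S.Nonempty := ⟨_, lo, ⟨hlo, fun x => ⟨le_rfl, hle x⟩⟩, rfl⟩
  have hbdd : BddBelow S := ⟨0, by
    rintro _ ⟨v, _, rfl⟩
    exact integral_nonneg fun x => dens_nonneg v x⟩
  obtain ⟨s, _, hs, hsS⟩ := exists_seq_tendsto_sInf hne hbdd
  choose v hv hvs using hsS
  have hb : ∀ k, |v k 0| ≤ |lo 0| + |hi 0| := by
    intro k
    have := (hv k).2 0
    rw [abs_le]
    constructor
    · linarith [neg_abs_le (lo 0), abs_nonneg (hi 0)]
    · linarith [le_abs_self (hi 0), abs_nonneg (lo 0)]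
  obtain ⟨φ, g, hφ, hg, hLU⟩ := arzela (fun k => (hv k).1) hb
  have hgc : Cls K lo hi g := ⟨hg, fun x => ⟨ge_of_tendsto (hLU.tendsto x) (Eventually.of_forall fun k => ((hv _).2 x).1),
    le_of_tendsto (hLU.tendsto x) (Eventually.of_forall fun k => ((hv _).2 x).2)⟩⟩
  refine ⟨g, hgc, fun w hw => ?_⟩
  rw [EX_eq hw.lip hgc.lip (hw.eqOff heq hgc)]
  have h1 : sInf S ≤ ∫ x in ball 0 1, dens w x := csInf_le hbdd ⟨w, hw, rfl⟩
  have h2 : ∫ x in ball 0 1, dens g x ≤ sInf S := by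
    refine le_of_forall_pos_le_add fun δ hδ => ?_
    have h3 := lsc (fun k => (hv (φ k)).1) hg hLU 1 (half_pos hδ)
    have h4 := (hs.comp hφ.tendsto_atTop).eventually_lt_const (show sInf S < sInf S + δ / 2 by linarith)
    obtain ⟨k, hk1, hk2⟩ := (h3.and h4).exists
    have := hvs (φ k)
    simp only [Function.comp] at hk2
    simp only at this
    linarith
  linarith

theorem haar (hn : 0 < n) {K K' Λ : ℝ≥0} {lo hi u : Eu n → ℝ} (hlo : LipschitzWith Λ lo) (hhi : LipschitzWith Λ hi)
    (hlo0 : ∀ x, 0 ≤ lo x) (heq : EqOff 1 lo hi) (hu : ClsMin K lo hi u) (hΛ : Λ ≤ K')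
    (hgr : ∀ x z, u z = 0 → u x ≤ K' * ‖x - z‖) : LipschitzWith K' u := by
  have hu0 : ∀ x, 0 ≤ u x := fun x => (hlo0 x).trans (hu.1.2 x).1
  have hL := hu.1.lip
  have hΛ' : (Λ : ℝ) ≤ K' := hΛ
  have lod : ∀ x h, |lo (x + h) - lo x| ≤ K' * ‖h‖ := by
    intro x h
    have := hlo.dist_le_mul (x + h) x
    rw [Real.dist_eq, dist_eq_norm, add_sub_cancel_left] at this
    exact this.trans (by gcongr)
  have hid : ∀ x h, |hi (x + h) - hi x| ≤ K' * ‖h‖ := by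
    intro x h
    have := hhi.dist_le_mul (x + h) x
    rw [Real.dist_eq, dist_eq_norm, add_sub_cancel_left] at this
    exact this.trans (by gcongr)
  have main : ∀ h x, u (x + h) - u x ≤ K' * ‖h‖ := by
    intro h
    set c : ℝ := K' * ‖h‖ with hc
    have hc0 : 0 ≤ c := by positivity
    set w : Eu n → ℝ := fun x => u (x + h) with hw
    have hwl : LipschitzWith K w := LipT hu.1.1 h
    have hwL : IsLip w := ⟨K, hwl⟩
    set η : Eu n → ℝ := fun x => max (w x - c - u x) 0 with hη
    have hηL : IsLip η := ((hwL.sub (isLip_const c)).sub hL).max (isLip_const 0)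
    have hη1 : ∀ x, u x + c < w x → 0 < u x := by
      intro x hx
      rcases (hu0 x).eq_or_lt with h0 | h0
      · have := hgr (x + h) x h0.symm
        rw [add_sub_cancel_left] at this
        simp only [hw] at hx
        linarith
      · exact h0
    have hoff : ∀ x, 1 ≤ ‖x‖ → w x ≤ u x + c := by
      intro x hx
      have h1 := hu.1.2 x
      have h2 := hu.1.2 (x + h)
      have h3 := heq x hx
      have h4 := (abs_le.1 (hid x h)).2
      simp only [hw]
      linarith [h1.1, h2.2]
    set u1 : Eu n → ℝ := fun x => max (u x) ((u x + w x + (-c)) / 2) with hu1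
    set w' : Eu n → ℝ := fun x => u (x + -h) with hw'
    have hw'l : LipschitzWith K w' := LipT hu.1.1 (-h)
    set u2 : Eu n → ℝ := fun x => min (u x) ((u x + w' x + c) / 2) with hu2
    have c1 : Cls K lo hi u1 := by
      refine ⟨by simpa using hu.1.1.max (LipAvg hu.1.1 hwl (-c)), fun x => ⟨(hu.1.2 x).1.trans (le_max_left _ _), max_le (hu.1.2 x).2 ?_⟩⟩
      have h2 := hu.1.2 (x + h)
      have h4 := (abs_le.1 (hid x h)).2
      simp only [hw]
      linarith [(hu.1.2 x).2, h2.2]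
    have c2 : Cls K lo hi u2 := by
      refine ⟨by simpa using hu.1.1.min (LipAvg hu.1.1 hw'l c), fun x => ⟨le_min (hu.1.2 x).1 ?_, (min_le_left _ _).trans (hu.1.2 x).2⟩⟩
      have h2 := hu.1.2 (x + -h)
      have h4 := (abs_le.1 (lod x (-h))).1
      rw [norm_neg] at h4
      simp only [hw']
      linarith [(hu.1.2 x).1, h2.1]
    have E1 := hu.2 u1 c1
    have E2 := hu.2 u2 c2
    rw [← EX_translate u2 u h] at E2
    set u3 : Eu n → ℝ := fun y => u2 (y + h) with hu3
    have hu3e : ∀ x, u3 x = min (w x) ((w x + u x + c) / 2) := by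
      intro x; simp [hu3, hu2, hw', hw]
    have hu3L : IsLip u3 := ⟨K, LipT c2.1 h⟩
    have o1 : EqOff 1 u1 u := by
      intro x hx
      simp only [hu1]
      apply max_eq_left
      linarith [hoff x hx]
    have o3 : EqOff 1 u3 w := by
      intro x hx
      rw [hu3e]
      apply min_eq_left
      linarith [hoff x hx]
    have i1 := integrable_dens_sub c1.lip hL o1
    have i3 := integrable_dens_sub hu3L hwL o3
    have hgi : Integrable (fun x => ‖gradient η x‖ ^ 2) := by
      obtain ⟨C, hC⟩ := hηL
      have hη0 : ∀ x, 1 ≤ ‖x‖ → η x = 0 := fun x hx => max_eq_right (by linarith [hoff x hx])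
      refine integrable_of_bdd_supp (M := (C : ℝ) ^ 2) (r := 2) ((measurable_gradient η).norm.pow_const 2) ?_ ?_
      · intro x
        have := norm_gradient_le hC x
        rw [abs_of_nonneg (by positivity)]
        gcongr
      · intro x hx
        have : η =ᶠ[𝓝 x] fun _ => 0 := by
          have : ∀ᶠ y in 𝓝 x, 1 < ‖y‖ := continuous_norm.continuousAt.eventually_const_lt (by linarith)
          filter_upwards [this] with y hy using hη0 y hy.le
        rw [this.gradient_eq]
        simp [gradient]
    have key : (fun x => (dens u1 x - dens u x) + (dens u3 x - dens w x)) =ᵐ[volume] fun x => -(1 / 2) * ‖gradient η x‖ ^ 2 := by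
      have hAL : IsLip (fun x => (1 / 2) * η x) := hηL.const_mul _
      have e1 : u1 = fun x => u x + (1 / 2) * η x := by
        ext x; simp only [hu1, hη]
        rcases le_total (w x - c - u x) 0 with h | h
        · rw [max_eq_right h, max_eq_left (by linarith)]; ring
        · rw [max_eq_left h, max_eq_right (by linarith)]; ring
      have e3 : u3 = fun x => w x - (1 / 2) * η x := by
        ext x; rw [hu3e]; simp only [hη]
        rcases le_total (w x - c - u x) 0 with h | h
        · rw [max_eq_right h, min_eq_left (by linarith)]; ring
        · rw [max_eq_left h, min_eq_right (by linarith)]; ring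
      filter_upwards [ae_dens_eq c1.lip hL, ae_dens_eq hu3L hwL, ae_grad_zero hηL,
          ae_grad_eq hηL ((hwL.sub (isLip_const c)).sub hL), hηL.ae_diff, hL.ae_diff, hwL.ae_diff] with x a1 a2 a3 a4 a5 a6 a7
      rcases le_or_gt (w x) (u x + c) with hx | hx
      · have e0 : η x = 0 := max_eq_right (by linarith)
        rw [a1 (by rw [e1]; simp [e0]), a2 (by rw [e3]; simp [e0]), a3 e0]; simp
      · have hux := hη1 x hx
        have hg : gradient η x = gradient w x - gradient u x := by
          rw [a4 (max_eq_left (by linarith)), gradient_sub (u := fun x => w x - c) (a7.sub_const c) a6,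
            gradient_sub a7 (differentiableAt_const c)]
          simp [gradient]
        have p1 : 0 < u1 x := hux.trans_le (le_max_left _ _)
        have p2 : 0 < w x := by linarith
        have p3 : 0 < u3 x := by rw [hu3e]; exact lt_min p2 (by linarith)
        unfold dens
        rw [if_pos hux, if_pos p1, if_pos p2, if_pos p3, e1, e3, gradient_add a6 (a5.const_mul _),
          gradient_sub a7 (a5.const_mul _), gradient_const_mul _ a5]
        have q1 := norm_add_sq_real (gradient u x) ((1 / 2 : ℝ) • gradient η x)
        have q2 := norm_sub_sq_real (gradient w x) ((1 / 2 : ℝ) • gradient η x)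
        have q3 : ‖(1 / 2 : ℝ) • gradient η x‖ ^ 2 = 1 / 4 * ‖gradient η x‖ ^ 2 := by
          rw [norm_smul]; norm_num; ring
        have q4 : ‖gradient η x‖ ^ 2 = inner ℝ (gradient w x) (gradient η x) - inner ℝ (gradient u x) (gradient η x) := by
          rw [← real_inner_self_eq_norm_sq]
          nth_rewrite 1 [hg]
          rw [inner_sub_left]
        rw [inner_smul_right] at q1 q2
        rw [q1, q2, q3]
        linarith
    have hsum : 0 ≤ ∫ x, -(1 / 2) * ‖gradient η x‖ ^ 2 := by
      rw [← integral_congr_ae key, integral_add i1 i3]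
      exact add_nonneg E1 E2
    rw [integral_const_mul] at hsum
    have hz : ∫ x, ‖gradient η x‖ ^ 2 = 0 := by
      apply le_antisymm
      · linarith
      · exact integral_nonneg fun x => by positivity
    rw [integral_eq_zero_iff_of_nonneg (fun x => by positivity) hgi] at hz
    have hz2 : ∀ x, η x = 0 := by
      refine zero_of_grad_zero hn hηL (r := 1) (fun x hx => max_eq_right (by linarith [hoff x hx])) (fun x => le_max_right _ _) ?_
      filter_upwards [hz] with x hx
      simpa using hx
    intro x
    have := (le_max_left (w x - c - u x) 0).trans_eq (hz2 x)
    simp only [hw] at this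
    linarith
  refine LipschitzWith.of_dist_le_mul fun x y => ?_
  rw [Real.dist_eq, dist_eq_norm, abs_le]
  have h1 := main (x - y) y
  have h2 := main (y - x) x
  rw [add_sub_cancel] at h1 h2
  rw [norm_sub_rev] at h2
  constructor <;> linarith

end ACF

namespace ACF
open Topology
variable {n : ℕ}

set_option maxHeartbeats 1000000 in
/-- scaled Gaussian bump barrier -/
theorem growth (hn : 0 < n) (Λ : ℝ≥0) : ∃ C0 : ℝ≥0, Λ ≤ C0 ∧ ∀ (K k : ℝ≥0) (lo hi u : Eu n → ℝ),
    LipschitzWith Λ hi → (∀ x, 0 ≤ lo x) → ClsMin K lo hi u → LipschitzWith k u →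
    C0 ≤ k → k ≤ K → ∀ x z, u z = 0 → u x ≤ 3 / 4 * k * ‖x - z‖ := by
  set α : ℝ := 8 * n + 1 with hα
  have hα0 : 0 < α := by positivity
  set a : ℝ := 2 * Real.exp (4 * α) / α with ha
  have ha0 : 0 < a := by positivity
  refine ⟨Λ * 6 + Real.toNNReal (3 * a) + Real.toNNReal (a * Real.sqrt α), ?_, ?_⟩
  · rw [← NNReal.coe_le_coe]; push_cast
    have : (0:ℝ) ≤ Λ := Λ.2
    have := (Real.toNNReal (3 * a)).2
    have := (Real.toNNReal (a * Real.sqrt α)).2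
    linarith
  intro K k lo hi u hhi hlo0 hu hku hCk hkK x0 z hz
  have hu0 : ∀ x, 0 ≤ u x := fun x => (hlo0 x).trans (hu.1.2 x).1
  rcases eq_or_ne x0 z with rfl | hne
  · rw [hz]; simp
  have hd : 0 < ‖x0 - z‖ := norm_pos_iff.2 (sub_ne_zero.2 hne)
  set d := ‖x0 - z‖ with hdd
  by_contra hcon
  push Not at hcon
  set M := u x0 with hM
  have hCk' := NNReal.coe_le_coe.2 hCk
  push_cast at hCk'
  rw [Real.coe_toNNReal _ (by positivity), Real.coe_toNNReal _ (by positivity)] at hCk'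
  have hsq : 0 ≤ a * Real.sqrt α := by positivity
  have hΛ0 : (0:ℝ) ≤ Λ := Λ.2
  have hkK' := NNReal.coe_le_coe.2 hkK
  have hM1 : 2 * (a * d) ≤ M := by nlinarith
  have hM2 : 4 * (Λ * d) ≤ M := by nlinarith
  have hM3 : k * d / 4 ≤ M / 3 := by nlinarith
  set β : ℝ := α / d ^ 2 with hβ
  have hβ0 : 0 < β := by positivity
  have hβd : β * d ^ 2 = α := by rw [hβ]; field_simp
  set B : ℝ := -(a * d * Real.exp (-(4 * α))) with hB
  set P := gP (a * d) B β x0 with hP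
  have had : 0 < a * d := by positivity
  have hPle : ∀ x, P x ≤ a * d := by
    intro x
    have h1 : ga β x0 x ≤ 1 := by
      unfold ga; rw [Real.exp_le_one_iff]; nlinarith [sq_nonneg ‖x - x0‖]
    have h2 : B ≤ 0 := by rw [hB]; simp; positivity
    simp only [hP, gP]
    nlinarith
  have hPout : ∀ x, 2 * d ≤ ‖x - x0‖ → P x ≤ 0 := by
    intro x hx
    have h1 : ga β x0 x ≤ Real.exp (-(4 * α)) := by
      unfold ga; rw [Real.exp_le_exp]
      have : (2 * d) ^ 2 ≤ ‖x - x0‖ ^ 2 := by gcongr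
      nlinarith
    simp only [hP, gP, hB]
    nlinarith
  have hin : ∀ x, u x < P x → ‖x - x0‖ < 2 * d := by
    intro x hx
    by_contra h
    linarith [hPout x (not_lt.1 h), hu0 x]
  have hin2 : ∀ x, u x < P x → d / 4 < ‖x - x0‖ := by
    intro x hx
    by_contra h
    push Not at h
    have h1 := hku.dist_le_mul x x0
    rw [Real.dist_eq, dist_eq_norm] at h1
    have h2 := (abs_le.1 h1).1
    have h3 : k * ‖x - x0‖ ≤ k * (d / 4) := by gcongr
    linarith [hPle x]
  have hcl : Cls K lo hi (fun x => max (u x) (P x)) := by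
    refine ⟨?_, fun x => ⟨(hu.1.2 x).1.trans (le_max_left _ _), max_le (hu.1.2 x).2 ?_⟩⟩
    · have h1 := gP_lip (a * d) B hβ0.le x0
      have h2 : Real.toNNReal (|a * d| * Real.sqrt β) ≤ K := by
        rw [Real.toNNReal_le_iff_le_coe, abs_of_pos had]
        have : Real.sqrt β = Real.sqrt α / d := by
          rw [hβ, Real.sqrt_div hα0.le, Real.sqrt_sq hd.le]
        rw [this]
        have : a * d * (Real.sqrt α / d) = a * Real.sqrt α := by field_simp
        rw [this]
        linarith
      have := (hu.1.1).max (h1.weaken h2)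
      simpa using this
    · rcases lt_or_ge ‖x - x0‖ (2 * d) with h | h
      · have h1 := hhi.dist_le_mul x x0
        rw [Real.dist_eq, dist_eq_norm] at h1
        have h2 := (abs_le.1 h1).1
        have h3 : Λ * ‖x - x0‖ ≤ Λ * (2 * d) := by gcongr
        linarith [hPle x, (hu.1.2 x0).2]
      · linarith [hPout x h, hu0 x, (hu.1.2 x).2]
  have hfin := cmp_lower hu.1.lip hu0 (A := a * d) (B := B) (p := x0) (r := ‖x0‖ + 2 * d) hβ0.le ?_ (hu.2 _ hcl) ?_ ?_ z
  · have h1 : ga β x0 z = Real.exp (-α) := by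
      unfold ga
      rw [norm_sub_rev, ← hdd, neg_mul, hβd]
    have h2 : Real.exp (-(4 * α)) < Real.exp (-α) := by
      rw [Real.exp_lt_exp]; linarith
    simp only [gP, h1, hB] at hfin
    rw [hz] at hfin
    nlinarith
  · intro x hx
    refine (hPout x ?_).trans (hu0 x)
    have := norm_sub_norm_le x x0
    linarith
  · intro x hx
    have h1 := hin2 x hx
    refine mul_pos had (mul_pos (ga_pos _ _ _) ?_)
    have h3 : (d / 4) ^ 2 ≤ ‖x - x0‖ ^ 2 := by gcongr
    have h4 : α / 16 ≤ β * ‖x - x0‖ ^ 2 := by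
      rw [← hβd]; nlinarith
    have h5 : (n : ℝ) < 2 * (β * ‖x - x0‖ ^ 2) := by linarith
    have h6 := mul_lt_mul_of_pos_left h5 hβ0
    linarith
  · refine ae_of_all _ fun x hx0 hx => ?_
    rw [gP_grad_norm _ _ hβ0.le, abs_of_pos had]
    have h1 := (hin x hx).le
    have h2 := (hin2 x hx).le
    have h3 : Real.exp (-(4 * α)) ≤ ga β x0 x := by
      unfold ga; rw [Real.exp_le_exp]
      have : ‖x - x0‖ ^ 2 ≤ (2 * d) ^ 2 := by gcongr
      nlinarith
    calc (1 : ℝ) = a * d * (2 * β * Real.exp (-(4 * α)) * (d / 4)) := by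
            rw [ha, hβ, Real.exp_neg]; field_simp; norm_num
      _ ≤ a * d * (2 * β * ga β x0 x * ‖x - x0‖) := by
            have := (ga_pos β x0 x).le
            gcongr

theorem thmA (hn : 0 < n) (Λ : ℝ≥0) : ∃ C : ℝ≥0, ∀ (lo hi : Eu n → ℝ),
    LipschitzWith Λ lo → LipschitzWith Λ hi → (∀ x, 0 ≤ lo x) → (∀ x, lo x ≤ hi x) → EqOff 1 lo hi →
    ∃ u, LipschitzWith C u ∧ (∀ x, lo x ≤ u x ∧ u x ≤ hi x) ∧
      ∀ v, IsLip v → (∀ x, lo x ≤ v x ∧ v x ≤ hi x) → 0 ≤ EX v u := by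
  obtain ⟨C, hΛC, hC⟩ := growth hn Λ
  refine ⟨C, fun lo hi hlo hhi hlo0 hle heq => ?_⟩
  have reg : ∀ K u, C ≤ K → ClsMin K lo hi u → LipschitzWith C u := by
    intro K u hCK hu
    set S : Set ℝ≥0 := {k | C ≤ k ∧ k ≤ K ∧ LipschitzWith k u} with hS
    have hKS : K ∈ S := ⟨hCK, le_rfl, hu.1.1⟩
    set k := sInf S with hk
    have hCk : C ≤ k := le_csInf ⟨K, hKS⟩ fun _ h => h.1
    have hkK : k ≤ K := csInf_le (OrderBot.bddBelow S) hKS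
    have hlk : LipschitzWith k u := by
      refine LipschitzWith.of_dist_le_mul fun x y => ?_
      refine le_of_forall_pos_le_add fun ε hε => ?_
      have hlt : k < k + Real.toNNReal (ε / (dist x y + 1)) := by
        refine lt_add_of_pos_right _ ?_
        simp; positivity
      obtain ⟨k', hk', hk'lt⟩ := exists_lt_of_csInf_lt ⟨K, hKS⟩ hlt
      have h1 := hk'.2.2.dist_le_mul x y
      have h2 : (k' : ℝ) ≤ k + ε / (dist x y + 1) := by
        have := NNReal.coe_le_coe.2 hk'lt.le
        push_cast at this
        rwa [Real.coe_toNNReal _ (by positivity)] at this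
      have h3 : ε / (dist x y + 1) * dist x y ≤ ε := by
        rw [div_mul_eq_mul_div, div_le_iff₀ (by positivity)]
        nlinarith [dist_nonneg (x := x) (y := y)]
      nlinarith [dist_nonneg (x := x) (y := y)]
    rcases hCk.eq_or_lt with h | h
    · rw [h]; exact hlk
    · exfalso
      have hg := hC K k lo hi u hhi hlo0 hu hlk hCk hkK
      set k' : ℝ≥0 := max C (Real.toNNReal (3 / 4 * k)) with hk'
      have hk0 : (0:ℝ) < k := lt_of_le_of_lt C.2 (NNReal.coe_lt_coe.2 h)
      have hlt : k' < k := by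
        refine max_lt h ?_
        rw [Real.toNNReal_lt_iff_lt_coe (by positivity)]
        linarith
      have hl : LipschitzWith k' u := by
        refine haar hn hlo hhi hlo0 heq hu (hΛC.trans (le_max_left _ _)) fun x z hz => (hg x z hz).trans ?_
        gcongr
        have : Real.toNNReal (3 / 4 * k) ≤ k' := le_max_right _ _
        rwa [Real.toNNReal_le_iff_le_coe] at this
      have := csInf_le (OrderBot.bddBelow S) (show k' ∈ S from ⟨le_max_left _ _, hlt.le.trans hkK, hl⟩)
      exact absurd hlt (not_lt.2 this)
  obtain ⟨u, hu⟩ := exists_clsMin (hlo.weaken hΛC) hle heq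
  refine ⟨u, hu.1.1, hu.1.2, fun v hv hvc => ?_⟩
  obtain ⟨Kv, hKv⟩ := id hv
  obtain ⟨u', hu'⟩ := exists_clsMin (hlo.weaken (hΛC.trans (le_max_left C Kv))) hle heq
  have h1 := reg _ u' (le_max_left C Kv) hu'
  have hcv : Cls (max C Kv) lo hi v := ⟨hKv.weaken (le_max_right _ _), hvc⟩
  have e1 := hu'.2 v hcv
  have hcu' : Cls C lo hi u' := ⟨h1, hu'.1.2⟩
  have e2 := hu.2 u' hcu'
  rw [← EX_add hv hu'.1.lip hu.1.lip (hcv.eqOff heq hu'.1) (hu'.1.eqOff heq hu.1)]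
  linarith

end ACF

namespace ACF
open Topology
variable {n : ℕ}

def MinIn (R : ℝ) (u : Eu n → ℝ) : Prop :=
  IsLip u ∧ (∀ x, 0 ≤ u x) ∧ ∀ v, IsLip v → (∀ x, 0 ≤ v x) → ∀ r, r < R → EqOff r v u → 0 ≤ EX v u

def GMin (u : Eu n → ℝ) : Prop := ∀ R, MinIn R u

theorem GMin.ex {u v : Eu n → ℝ} (h : GMin u) (hv : IsLip v) (hv0 : ∀ x, 0 ≤ v x) {r : ℝ} (he : EqOff r v u) :
    0 ≤ EX v u := (h (r + 1)).2.2 v hv hv0 r (by linarith) he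

/-- rescaling -/
noncomputable def sc (d : ℝ) (u : Eu n → ℝ) (x : Eu n) : ℝ := d⁻¹ * u (d • x)

theorem sc_grad {d : ℝ} (hd : 0 < d) (u : Eu n → ℝ) (x : Eu n) : gradient (sc d u) x = gradient u (d • x) := by
  unfold gradient
  congr 1
  have h1 : fderiv ℝ (sc d u) x = d⁻¹ • fderiv ℝ (fun x => u (d • x)) x := by
    have := congrFun (fderiv_const_smul_field (𝕜 := ℝ) d⁻¹ (f := fun x => u (d • x))) x
    exact this
  have h2 := fderiv_comp_smul (𝕜 := ℝ) (f := u) (x := x) d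
  rw [h1, h2, smul_smul, inv_mul_cancel₀ hd.ne', one_smul]

theorem sc_dens {d : ℝ} (hd : 0 < d) (u : Eu n → ℝ) (x : Eu n) : dens (sc d u) x = dens u (d • x) := by
  unfold dens
  rw [sc_grad hd]
  have : 0 < sc d u x ↔ 0 < u (d • x) := by
    unfold sc; rw [mul_pos_iff_of_pos_left (by positivity)]
  simp only [this]

theorem sc_EX {d : ℝ} (hd : 0 < d) (u v : Eu n → ℝ) : EX (sc d u) (sc d v) = (d ^ n)⁻¹ * EX u v := by
  unfold EX
  simp_rw [sc_dens hd]
  rw [Measure.integral_comp_smul volume (fun x => dens u x - dens v x) d]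
  simp [abs_of_pos hd]

theorem sc_lip {d : ℝ} (hd : 0 < d) {u : Eu n → ℝ} {K : ℝ≥0} (hu : LipschitzWith K u) : LipschitzWith K (sc d u) := by
  refine LipschitzWith.of_dist_le_mul fun x y => ?_
  have := hu.dist_le_mul (d • x) (d • y)
  rw [dist_smul₀, Real.norm_of_nonneg hd.le] at this
  unfold sc
  rw [Real.dist_eq] at *
  rw [← mul_sub, abs_mul, abs_of_pos (inv_pos.2 hd), inv_mul_le_iff₀ hd]
  linarith

theorem sc_isLip {d : ℝ} (hd : 0 < d) {u : Eu n → ℝ} (hu : IsLip u) : IsLip (sc d u) := by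
  obtain ⟨K, hK⟩ := hu; exact ⟨K, sc_lip hd hK⟩

theorem sc_sc {d : ℝ} (hd : 0 < d) (u : Eu n → ℝ) : sc d (sc d⁻¹ u) = u := by
  ext x; unfold sc
  rw [smul_smul, inv_mul_cancel₀ hd.ne', one_smul, inv_inv, ← mul_assoc, inv_mul_cancel₀ hd.ne', one_mul]

theorem sc_nonneg {d : ℝ} (hd : 0 < d) {u : Eu n → ℝ} (hu : ∀ x, 0 ≤ u x) : ∀ x, 0 ≤ sc d u x := fun x =>
  mul_nonneg (inv_nonneg.2 hd.le) (hu _)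

theorem MinIn.sc {d R : ℝ} (hd : 0 < d) {u : Eu n → ℝ} (hu : MinIn R u) : MinIn (R / d) (sc d u) := by
  refine ⟨sc_isLip hd hu.1, sc_nonneg hd hu.2.1, fun v hv hv0 r hr he => ?_⟩
  have hd' : 0 < d⁻¹ := inv_pos.2 hd
  rw [← sc_sc hd v, sc_EX hd]
  have : 0 ≤ EX (ACF.sc d⁻¹ v) u := by
    refine hu.2.2 _ (sc_isLip hd' hv) (sc_nonneg hd' hv0) (d * r) ?_ ?_
    · rw [lt_div_iff₀ hd] at hr; linarith
    · intro x hx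
      have h1 := he (d⁻¹ • x) (by
        rw [norm_smul, Real.norm_of_nonneg hd'.le, le_inv_mul_iff₀ hd]; exact hx)
      unfold ACF.sc at h1 ⊢
      rw [h1, smul_smul, mul_inv_cancel₀ hd.ne', one_smul, inv_inv, ← mul_assoc, mul_inv_cancel₀ hd.ne', one_mul]
  positivity

theorem GMin.sc {d : ℝ} (hd : 0 < d) {u : Eu n → ℝ} (hu : GMin u) : GMin (sc d u) := by
  intro R
  have := (hu (R * d)).sc hd
  rwa [mul_div_cancel_right₀ _ hd.ne'] at this

theorem GMin.translate {u : Eu n → ℝ} (hu : GMin u) (h : Eu n) : GMin (fun x => u (x + h)) := by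
  intro R
  obtain ⟨K, hK⟩ := (hu 0).1
  refine ⟨⟨K, LipT hK h⟩, fun x => (hu 0).2.1 _, fun v hv hv0 r _ he => ?_⟩
  obtain ⟨L, hL⟩ := hv
  have hEE := EX_translate (fun z => v (z + -h)) u h
  simp only [neg_add_cancel_right, add_neg_cancel_right] at hEE
  have hEE' : EX v (fun x => u (x + h)) = EX (fun z => v (z + -h)) u := hEE
  rw [hEE']
  refine hu.ex ⟨L, LipT hL (-h)⟩ (fun x => hv0 _) (r := r + ‖h‖) fun x hx => ?_
  have := he (x + -h) (by
    have := norm_sub_norm_le x h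
    rw [sub_eq_add_neg x h] at this
    linarith)
  simpa using this

theorem exists_sphere (hn : 0 < n) (p x : Eu n) {r : ℝ} (hr : 0 < r) :
    ∃ y : Eu n, ‖y - p‖ = r ∧ ‖x - y‖ = |‖x - p‖ - r| := by
  haveI : Nonempty (Fin n) := ⟨⟨0, hn⟩⟩
  rcases eq_or_ne x p with rfl | hne
  · obtain ⟨e, he⟩ := exists_norm_eq (Eu n) hr.le
    refine ⟨x + e, by simpa using he, ?_⟩
    simp [he, abs_of_pos hr]
  · have ht : 0 < ‖x - p‖ := norm_pos_iff.2 (sub_ne_zero.2 hne)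
    refine ⟨p + (r / ‖x - p‖) • (x - p), ?_, ?_⟩
    · rw [add_sub_cancel_left, norm_smul, Real.norm_of_nonneg (by positivity)]
      field_simp
    · have : x - (p + (r / ‖x - p‖) • (x - p)) = (1 - r / ‖x - p‖) • (x - p) := by
        rw [sub_smul, one_smul]; abel
      rw [this, norm_smul, Real.norm_eq_abs]
      rw [show ‖x - p‖ - r = (1 - r / ‖x - p‖) * ‖x - p‖ by field_simp, abs_mul, abs_of_pos ht]

set_option maxHeartbeats 1000000 in
theorem nondeg (hn : 0 < n) : ∃ c : ℝ, 0 < c ∧ ∀ (u : Eu n → ℝ) (R : ℝ) (p : Eu n) (r : ℝ), MinIn R u → 0 < r →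
    ‖p‖ + r < R → (∀ x, ‖x - p‖ ≤ r → u x ≤ c * r) → ∀ x, ‖x - p‖ ≤ r / 2 → u x = 0 := by
  have hn' : (0:ℝ) < n := by exact_mod_cast hn
  set α : ℝ := 2 * n + 1 with hα
  have hα0 : 0 < α := by positivity
  set a : ℝ := 1 / (2 * α) with ha
  have ha0 : 0 < a := by positivity
  have haα : a * α = 1 / 2 := by rw [ha]; field_simp
  have hexp : Real.exp (-α) < Real.exp (-(α / 4)) := by rw [Real.exp_lt_exp]; linarith
  set c : ℝ := min (a * (Real.exp (-(α / 4)) - Real.exp (-α))) (1 / (4 * n)) with hc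
  have hc0 : 0 < c := lt_min (mul_pos ha0 (by linarith)) (by positivity)
  refine ⟨c, hc0, fun u R p r hu hr hR hsmall => ?_⟩
  obtain ⟨Ku, hKu⟩ := id hu.1
  set β : ℝ := α / r ^ 2 with hβ
  have hβ0 : 0 < β := by positivity
  have hβr : β * r ^ 2 = α := by rw [hβ]; field_simp
  set A : ℝ := -(a * r) with hA
  set B : ℝ := a * r * Real.exp (-(α / 4)) with hB
  have har : 0 < a * r := by positivity
  set Q : Eu n → ℝ := gP A B β p with hQ
  set KQ := Real.toNNReal (|A| * Real.sqrt β) with hKQ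
  have hQl : LipschitzWith KQ Q := gP_lip A B hβ0.le p
  set k : ℝ := Ku + KQ with hk
  have hk0 : 0 ≤ k := by positivity
  have hQval : ∀ x, Q x = a * r * (Real.exp (-(α / 4)) - ga β p x) := by
    intro x; simp only [hQ, gP, hA, hB]; ring
  have hQr : ∀ y, ‖y - p‖ = r → c * r ≤ Q y := by
    intro y hy
    have h1 : ga β p y = Real.exp (-α) := by
      unfold ga; rw [hy, neg_mul, hβr]
    have h2 : c ≤ a * (Real.exp (-(α / 4)) - Real.exp (-α)) := min_le_left _ _
    rw [hQval, h1]
    nlinarith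
  set m : Eu n → ℝ := fun x => k * (‖x - p‖ - r) + c * r with hm
  have hmL : IsLip m := by
    have h1 : LipschitzWith 1 (fun x : Eu n => ‖x - p‖) := by
      refine LipschitzWith.of_dist_le_mul fun x y => ?_
      rw [Real.dist_eq]
      have := abs_norm_sub_norm_le (x - p) (y - p)
      rw [sub_sub_sub_cancel_right] at this
      simpa [dist_eq_norm] using this
    have h2 : IsLip (fun x : Eu n => ‖x - p‖) := ⟨1, h1⟩
    exact ((h2.sub (isLip_const r)).const_mul k).add (isLip_const _)
  have hout : ∀ x, r ≤ ‖x - p‖ → u x ≤ m x := by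
    intro x hx
    obtain ⟨y, hy1, hy2⟩ := exists_sphere hn p x hr
    rw [abs_of_nonneg (by linarith)] at hy2
    have h1 := hKu.dist_le_mul x y
    rw [Real.dist_eq, dist_eq_norm, hy2] at h1
    have h2 := (abs_le.1 h1).2
    have h3 := hsmall y hy1.le
    have h4 : (Ku : ℝ) * (‖x - p‖ - r) ≤ k * (‖x - p‖ - r) := by
      refine mul_le_mul_of_nonneg_right ?_ (by linarith)
      have := KQ.2; simp only [hk]; linarith [NNReal.coe_nonneg KQ]
    simp only [hm]; linarith
  have hins : ∀ x, ‖x - p‖ ≤ r → m x ≤ Q x := by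
    intro x hx
    obtain ⟨y, hy1, hy2⟩ := exists_sphere hn p x hr
    rw [abs_of_nonpos (by linarith)] at hy2
    have h1 := hQl.dist_le_mul x y
    rw [Real.dist_eq, dist_eq_norm, hy2] at h1
    have h2 := (abs_le.1 h1).1
    have h3 := hQr y hy1
    have h4 : (KQ : ℝ) * (r - ‖x - p‖) ≤ k * (r - ‖x - p‖) := by
      refine mul_le_mul_of_nonneg_right ?_ (by linarith)
      simp only [hk]; linarith [NNReal.coe_nonneg Ku]
    simp only [hm]; linarith
  set v : Eu n → ℝ := fun x => min (u x) (max (max (Q x) 0) (m x)) with hv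
  have hQL : IsLip Q := ⟨KQ, hQl⟩
  have hvL : IsLip v := hu.1.min ((hQL.max (isLip_const 0)).max hmL)
  have hvout : ∀ x, r ≤ ‖x - p‖ → v x = u x := fun x hx => min_eq_left ((hout x hx).trans (le_max_right _ _))
  have hvin : ∀ x, ‖x - p‖ ≤ r → v x = min (u x) (max (Q x) 0) := by
    intro x hx
    simp only [hv]
    rw [max_eq_left ((hins x hx).trans (le_max_left _ _))]
  have hlt : ∀ x, v x < u x → ‖x - p‖ < r := by
    intro x hx
    by_contra h
    exact hx.ne (hvout x (not_lt.1 h))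
  have hoff : EqOff (‖p‖ + r) v u := by
    intro x hx
    apply hvout
    have := norm_sub_norm_le x p
    linarith
  have hQsign : ∀ x, Q x ≤ 0 ↔ β * ‖x - p‖ ^ 2 ≤ α / 4 := by
    intro x
    rw [hQval, ← not_lt, mul_pos_iff_of_pos_left har, not_lt, sub_nonpos]
    unfold ga
    rw [Real.exp_le_exp]
    constructor <;> intro h <;> linarith
  have hfin := cmp_upper (A := A) (B := B) (β := β) (p := p) hu.1 hvL hu.2.1 (fun x => min_le_left _ _) hβ0.le hoff
    (hu.2.2 v hvL (fun x => le_min (hu.2.1 x) ((le_max_right _ _).trans (le_max_left _ _))) _ hR hoff) ?_ ?_ ?_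
  · intro x hx
    have h1 := hfin x
    rw [hvin x (by linarith)] at h1
    have h2 : Q x ≤ 0 := by
      rw [hQsign, ← hβr]
      have : ‖x - p‖ ^ 2 ≤ (r / 2) ^ 2 := by gcongr
      nlinarith
    rw [max_eq_right h2] at h1
    refine le_antisymm ?_ (hu.2.1 x)
    rw [← h1]; exact min_le_right _ _
  · intro x hx
    have h1 := hlt x hx
    have h2 := hvin x h1.le
    rw [h2] at hx ⊢
    rcases min_lt_iff.1 hx with h | h
    · exact absurd h (lt_irrefl _)
    · exact min_eq_right h.le
  · intro x hx hQx
    have h1 : ¬ Q x ≤ 0 := not_le.2 hQx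
    rw [hQsign, not_le] at h1
    have h2 : 0 < 4 * β ^ 2 * ‖x - p‖ ^ 2 - 2 * β * n := by
      have h5 : (n : ℝ) < 2 * (β * ‖x - p‖ ^ 2) := by linarith
      have h6 := mul_lt_mul_of_pos_left h5 hβ0
      linarith
    have := mul_pos har (mul_pos (ga_pos β p x) h2)
    simp only [hA, gl]
    linarith
  · intro x hx hQx
    have hxr := hlt x hx
    have h1 := (hQsign x).1 hQx
    have hux := hsmall x hxr.le
    have hg1 : ga β p x ≤ 1 := by
      unfold ga; rw [Real.exp_le_one_iff]; nlinarith [sq_nonneg ‖x - p‖]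
    have hg0 := (ga_pos β p x).le
    have h3 : A * gl β p x ≤ n / r := by
      have e1 : A * gl β p x ≤ a * r * (ga β p x * (2 * β * n)) := by
        simp only [hA, gl]
        have : 0 ≤ a * r * (ga β p x * (4 * β ^ 2 * ‖x - p‖ ^ 2)) := by positivity
        linarith
      have e2 : a * r * (ga β p x * (2 * β * n)) ≤ a * r * (1 * (2 * β * n)) := by gcongr
      have e3 : a * r * (1 * (2 * β * n)) = n / r := by
        rw [hβ]
        have : a * r * (1 * (2 * (α / r ^ 2) * n)) = (a * α) * (2 * n / r) := by field_simp
        rw [this, haα]; field_simp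
      linarith
    have h4 : ‖gradient Q x‖ ^ 2 ≤ 1 / 4 := by
      rw [hQ, gP_grad_norm _ _ hβ0.le]
      have e1 : |A| = a * r := by rw [hA, abs_neg, abs_of_pos har]
      have ht : ‖x - p‖ ≤ r / 2 := by
        rw [← hβr] at h1
        have : ‖x - p‖ ^ 2 ≤ (r / 2) ^ 2 := by
          have : β * ‖x - p‖ ^ 2 ≤ β * (r / 2) ^ 2 := by linarith
          exact le_of_mul_le_mul_left this hβ0
        exact (pow_le_pow_iff_left₀ (norm_nonneg _) (by positivity) (by norm_num)).1 this
      have e2 : |A| * (2 * β * ga β p x * ‖x - p‖) ≤ 1 / 2 := by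
        rw [e1]
        calc a * r * (2 * β * ga β p x * ‖x - p‖) ≤ a * r * (2 * β * 1 * (r / 2)) := by gcongr
          _ = a * (β * r ^ 2) := by ring
          _ = 1 / 2 := by rw [hβr, haα]
      have e3 : 0 ≤ |A| * (2 * β * ga β p x * ‖x - p‖) := by positivity
      nlinarith
    have h5 : c ≤ 1 / (4 * n) := min_le_right _ _
    have h6 : 2 * (A * gl β p x) * u x ≤ 1 / 2 := by
      have hu0 := hu.2.1 x
      calc 2 * (A * gl β p x) * u x ≤ 2 * (n / r) * u x := by gcongr
        _ ≤ 2 * (n / r) * (c * r) := by gcongr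
        _ ≤ 2 * (n / r) * (1 / (4 * n) * r) := by gcongr
        _ = 1 / 2 := by field_simp; norm_num
    linarith

end ACF

namespace ACF
open Topology
variable {n : ℕ}

theorem isLip_norm : IsLip (fun x : Eu n => ‖x‖) := ⟨1, lipschitzWith_one_norm⟩

theorem EX_max_min {f W : Eu n → ℝ} (hf : IsLip f) (hW : IsLip W) :
    EX (fun x => max (f x) (W x)) f = - EX (fun x => min (f x) (W x)) W := by
  unfold EX
  rw [← integral_neg]
  refine integral_congr_ae ?_
  filter_upwards [ae_max_min hf hW] with x hx
  linarith

theorem EX_min_max {f W : Eu n → ℝ} (hf : IsLip f) (hW : IsLip W) :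
    EX (fun x => min (f x) (W x)) f = - EX (fun x => max (f x) (W x)) W := by
  unfold EX
  rw [← integral_neg]
  refine integral_congr_ae ?_
  filter_upwards [ae_max_min hf hW] with x hx
  linarith

theorem EX_antisymm (u v : Eu n → ℝ) : EX u v = - EX v u := by
  unfold EX
  rw [← integral_neg]
  congr 1; ext x; ring

def SubMin (W : Eu n → ℝ) : Prop := IsLip W ∧ (∀ x, 0 ≤ W x) ∧
  ∀ f, IsLip f → (∀ x, 0 ≤ f x) → ∀ r : ℝ, (∀ x, r ≤ ‖x‖ → W x ≤ f x) → EX (fun x => max (f x) (W x)) f ≤ 0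

def SuperMin (W : Eu n → ℝ) : Prop := IsLip W ∧ (∀ x, 0 ≤ W x) ∧
  ∀ f, IsLip f → (∀ x, 0 ≤ f x) → ∀ r : ℝ, (∀ x, r ≤ ‖x‖ → f x ≤ W x) → EX (fun x => min (f x) (W x)) f ≤ 0

theorem GMin.sub {W : Eu n → ℝ} (h : GMin W) : SubMin W := by
  refine ⟨(h 0).1, (h 0).2.1, fun f hf hf0 r hr => ?_⟩
  rw [EX_max_min hf (h 0).1]
  have := h.ex (hf.min (h 0).1) (fun x => le_min (hf0 x) ((h 0).2.1 x)) (r := r) (fun x hx => min_eq_right (hr x hx))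
  linarith

theorem GMin.super {W : Eu n → ℝ} (h : GMin W) : SuperMin W := by
  refine ⟨(h 0).1, (h 0).2.1, fun f hf hf0 r hr => ?_⟩
  rw [EX_min_max hf (h 0).1]
  have := h.ex (hf.max (h 0).1) (fun x => le_max_of_le_left (hf0 x)) (r := r) (fun x hx => max_eq_right (hr x hx))
  linarith

theorem SubMin.max {V W : Eu n → ℝ} (hV : SubMin V) (hW : SubMin W) : SubMin (fun x => max (V x) (W x)) := by
  refine ⟨hV.1.max hW.1, fun x => le_max_of_le_left (hV.2.1 x), fun f hf hf0 r hr => ?_⟩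
  have h1 := hV.2.2 f hf hf0 r (fun x hx => (le_max_left _ _).trans (hr x hx))
  have h2 := hW.2.2 (fun x => Max.max (f x) (V x)) (hf.max hV.1) (fun x => le_max_of_le_left (hf0 x)) r
    (fun x hx => (le_max_right _ _).trans ((hr x hx).trans (le_max_left _ _)))
  have h3 := EX_add (r := r) ((hf.max hV.1).max hW.1) (hf.max hV.1) hf
    (fun x hx => max_eq_left ((le_max_right _ _).trans ((hr x hx).trans (le_max_left _ _))))
    (fun x hx => max_eq_left ((le_max_left _ _).trans (hr x hx)))
  simp only [max_assoc] at h2 h3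
  linarith

theorem SuperMin.min {V W : Eu n → ℝ} (hV : SuperMin V) (hW : SuperMin W) : SuperMin (fun x => min (V x) (W x)) := by
  refine ⟨hV.1.min hW.1, fun x => le_min (hV.2.1 x) (hW.2.1 x), fun f hf hf0 r hr => ?_⟩
  have h1 := hV.2.2 f hf hf0 r (fun x hx => (hr x hx).trans (min_le_left _ _))
  have h2 := hW.2.2 (fun x => Min.min (f x) (V x)) (hf.min hV.1) (fun x => le_min (hf0 x) (hV.2.1 x)) r
    (fun x hx => (min_le_left _ _).trans ((hr x hx).trans (min_le_right _ _)))
  have h3 := EX_add (r := r) ((hf.min hV.1).min hW.1) (hf.min hV.1) hf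
    (fun x hx => min_eq_left ((min_le_left _ _).trans ((hr x hx).trans (min_le_right _ _))))
    (fun x hx => min_eq_left ((hr x hx).trans (min_le_left _ _)))
  simp only [min_assoc] at h2 h3
  linarith

theorem glue (hn : 0 < n) {K : ℝ≥0} {ρ t : ℝ} (hρ : 0 < ρ) (ht : 0 < t) {g f : Eu n → ℝ}
    (hg : LipschitzWith K g) (hf : LipschitzWith K f) (hg0 : ∀ x, 0 ≤ g x) (hf0 : ∀ x, 0 ≤ f x)
    (hgf : ∀ x, ‖x‖ = ρ → |g x - f x| ≤ t) :
    ∃ h : Eu n → ℝ, IsLip h ∧ (∀ x, 0 ≤ h x) ∧ (∀ x, min (g x) (f x) ≤ h x ∧ h x ≤ max (g x) (f x)) ∧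
      EqOff (ρ + t) h f ∧ ∫ x in ball 0 (ρ + t), dens h x ≤ (∫ x in ball 0 ρ, dens g x) +
        (((K : ℝ) + 1) ^ 2 + 1) * (volume.real (ball (0 : Eu n) (ρ + t)) - volume.real (ball (0 : Eu n) ρ)) := by
  have hgL : IsLip g := ⟨K, hg⟩
  have hfL : IsLip f := ⟨K, hf⟩
  set σ' : Eu n → ℝ := fun x => max (ρ + t - ‖x‖) 0 with hσ'
  set σ : Eu n → ℝ := fun x => σ' x + 2 * K * max (ρ - ‖x‖) 0 with hσ
  have hσ'l : LipschitzWith 1 σ' := by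
    have h1 : LipschitzWith 1 (fun x : Eu n => ρ + t - ‖x‖) := by
      have := (LipschitzWith.const (α := Eu n) (ρ + t)).sub (lipschitzWith_one_norm (E := Eu n))
      simpa using this
    exact h1.max_const 0
  have hσ'L : IsLip σ' := ⟨1, hσ'l⟩
  have hσL : IsLip σ := hσ'L.add ((((isLip_const ρ).sub isLip_norm).max (isLip_const 0)).const_mul (2 * K))
  have hσ'0 : ∀ x, 0 ≤ σ' x := fun x => le_max_right _ _
  have hσ0 : ∀ x, 0 ≤ σ x := fun x => by
    have h1 := hσ'0 x
    have h2 : 0 ≤ max (ρ - ‖x‖) 0 := le_max_right _ _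
    simp only [hσ]; positivity
  set h : Eu n → ℝ := fun x => max (f x - σ x) (min (g x) (f x + σ x)) with hh
  set h' : Eu n → ℝ := fun x => max (f x - σ' x) (min (g x) (f x + σ' x)) with hh'
  have hhL : IsLip h := (hfL.sub hσL).max (hgL.min (hfL.add hσL))
  have hh'l : LipschitzWith (K + 1) h' := by
    have h1 := (hf.sub hσ'l).max (hg.min (hf.add hσ'l))
    refine h1.weaken ?_
    simp
  have hb : ∀ x, min (g x) (f x) ≤ h x ∧ h x ≤ max (g x) (f x) := by
    intro x
    have := hσ0 x
    constructor
    · refine le_max_of_le_right (min_le_min_left _ (by linarith))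
    · refine max_le (le_max_of_le_right (by linarith)) (le_max_of_le_left (min_le_left _ _))
  have hin : ∀ x, ‖x‖ ≤ ρ → h x = g x := by
    intro x hx
    obtain ⟨y, hy1, hy2⟩ := exists_sphere hn 0 x hρ
    rw [sub_zero] at hy1 hy2
    rw [abs_of_nonpos (by linarith)] at hy2
    have h1 := hgf y hy1
    have h2 := hg.dist_le_mul x y
    have h3 := hf.dist_le_mul x y
    rw [Real.dist_eq, dist_eq_norm, hy2] at h2 h3
    have h4 : σ x = (ρ + t - ‖x‖) + 2 * K * (ρ - ‖x‖) := by
      simp only [hσ, hσ']; rw [max_eq_left (by linarith), max_eq_left (by linarith)]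
    rw [abs_le] at h1 h2 h3
    simp only [hh]
    rw [min_eq_left (by rw [h4]; linarith), max_eq_right (by rw [h4]; linarith)]
  have hann : ∀ x, ρ ≤ ‖x‖ → h x = h' x := by
    intro x hx
    have : σ x = σ' x := by simp only [hσ]; rw [max_eq_right (by linarith)]; ring
    simp only [hh, hh', this]
  have hoff : EqOff (ρ + t) h f := by
    intro x hx
    rw [hann x (by linarith)]
    have : σ' x = 0 := max_eq_right (by linarith)
    simp only [hh', this, sub_zero, add_zero]
    exact max_eq_left (min_le_right _ _)
  refine ⟨h, hhL, fun x => (le_min (hg0 x) (hf0 x)).trans (hb x).1, hb, hoff, ?_⟩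
  have hsub : ball (0 : Eu n) ρ ⊆ ball 0 (ρ + t) := ball_subset_ball (by linarith)
  have e1 := setIntegral_diff (μ := volume) (f := dens h) measurableSet_ball (integrableOn_dens hhL (ρ + t)) hsub
  have e2 : ∫ x in ball 0 ρ, dens h x = ∫ x in ball 0 ρ, dens g x := by
    refine setIntegral_congr_ae measurableSet_ball ?_
    filter_upwards [ae_dens_eq hhL hgL] with x hx hxb
    exact hx (hin x (by simpa using (mem_ball_zero_iff.1 hxb).le))
  have e3 : ∫ x in ball 0 (ρ + t) \ ball 0 ρ, dens h x ≤
      ∫ x in ball (0 : Eu n) (ρ + t) \ ball 0 ρ, (((K : ℝ) + 1) ^ 2 + 1) := by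
    refine setIntegral_mono_on_ae ((integrableOn_dens hhL (ρ + t)).mono_set diff_subset) ?_
      (measurableSet_ball.diff measurableSet_ball) ?_
    · exact integrableOn_const (by exact ((measure_mono diff_subset).trans_lt measure_ball_lt_top).ne)
    · filter_upwards [ae_dens_eq hhL ⟨_, hh'l⟩] with x hx hxb
      rw [hx (hann x (by simpa using hxb.2))]
      simpa using dens_le hh'l x
  rw [setIntegral_const, smul_eq_mul, measureReal_diff hsub measurableSet_ball measure_ball_lt_top.ne] at e3
  linarith

theorem annulus (hn : 0 < n) {ρ : ℝ} (hρ : 0 < ρ) (C : ℝ) {δ : ℝ} (hδ : 0 < δ) : ∃ t : ℝ, 0 < t ∧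
    C * (volume.real (ball (0 : Eu n) (ρ + t)) - volume.real (ball (0 : Eu n) ρ)) ≤ δ := by
  have hv : ∀ r : ℝ, 0 ≤ r → volume.real (ball (0 : Eu n) r) = r ^ n * volume.real (ball (0 : Eu n) 1) := by
    intro r hr
    have : Nontrivial (Eu n) := by
      have : Nonempty (Fin n) := ⟨⟨0, hn⟩⟩
      infer_instance
    unfold Measure.real
    rw [Measure.addHaar_ball _ _ hr, ENNReal.toReal_mul, ENNReal.toReal_ofReal (by positivity)]
    simp
  have hc : Tendsto (fun t : ℝ => C * ((ρ + t) ^ n * volume.real (ball (0 : Eu n) 1) - ρ ^ n * volume.real (ball (0 : Eu n) 1)))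
      (𝓝[>] 0) (𝓝 0) := by
    refine tendsto_nhdsWithin_of_tendsto_nhds ?_
    have : Continuous (fun t : ℝ => C * ((ρ + t) ^ n * volume.real (ball (0 : Eu n) 1) - ρ ^ n * volume.real (ball (0 : Eu n) 1))) := by
      fun_prop
    simpa using this.tendsto 0
  obtain ⟨t, ht1, ht2⟩ := ((hc.eventually (ge_mem_nhds hδ)).and self_mem_nhdsWithin).exists
  have ht2 : 0 < t := ht2
  refine ⟨t, ht2, ?_⟩
  rw [hv _ (by linarith), hv _ hρ.le]
  exact ht1

theorem setInt_mono {u : Eu n → ℝ} (hu : IsLip u) {r s : ℝ} (h : r ≤ s) :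
    ∫ x in ball 0 r, dens u x ≤ ∫ x in ball 0 s, dens u x :=
  setIntegral_mono_set (integrableOn_dens hu s) (Eventually.of_forall fun x => dens_nonneg u x)
    (LE.le.eventuallyLE (ball_subset_ball h))

theorem lemC (hn : 0 < n) {f : ℕ → Eu n → ℝ} {g : Eu n → ℝ} {K : ℝ≥0} (hf : ∀ k, LipschitzWith K (f k))
    {R : ℕ → ℝ} (hR : Tendsto R atTop atTop) (hmin : ∀ k, MinIn (R k) (f k)) (hg : LipschitzWith K g)
    (hLU : LU f g) : GMin g := by
  have hg0 : ∀ x, 0 ≤ g x := fun x => ge_of_tendsto' (hLU.tendsto x) fun k => (hmin k).2.1 x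
  have hgL : IsLip g := ⟨K, hg⟩
  intro R'
  refine ⟨hgL, hg0, fun v hv hv0 r _ he => ?_⟩
  obtain ⟨Kv, hKv⟩ := id hv
  set ρ : ℝ := max r 0 + 1 with hρ
  have hρ0 : 0 < ρ := by have := le_max_right r 0; linarith
  have hrρ : r ≤ ρ := by have := le_max_left r 0; linarith
  rw [EX_eq hv hgL (he.mono hrρ), sub_nonneg]
  refine le_of_forall_pos_le_add fun δ hδ => ?_
  obtain ⟨t, ht, hann⟩ := annulus hn hρ0 ((((max K Kv : ℝ≥0) : ℝ) + 1) ^ 2 + 1) (half_pos hδ)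
  obtain ⟨k, h1, h2, h3⟩ := ((lsc hf hg hLU ρ (half_pos hδ)).and ((hLU ρ t ht).and
    (hR.eventually (eventually_gt_atTop (ρ + t))))).exists
  obtain ⟨h, hhL, hh0, hb, hoff, hintg⟩ := glue hn hρ0 ht (hKv.weaken (le_max_right K Kv))
    ((hf k).weaken (le_max_left K Kv)) hv0 (hmin k).2.1 (fun x hx => by
      rw [he x (by linarith), abs_sub_comm]; exact h2 x hx.le)
  have h4 := (hmin k).2.2 h hhL hh0 _ h3 hoff
  rw [EX_eq hhL (hmin k).1 hoff] at h4
  have h5 := setInt_mono (hmin k).1 (show ρ ≤ ρ + t by linarith)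
  linarith

theorem lemB (hn : 0 < n) {ψ W : ℕ → Eu n → ℝ} {U v : Eu n → ℝ} {K : ℝ≥0} (hψ : ∀ k, LipschitzWith K (ψ k))
    (hW : ∀ k, LipschitzWith K (W k)) (hW0 : ∀ k x, 0 ≤ W k x) (hψ0 : ∀ k x, 0 ≤ ψ k x)
    (hv : LipschitzWith K v) (hUl : LipschitzWith K U)
    (hoff : ∀ k, EqOff 1 (ψ k) (W k)) (hEX : ∀ k, 0 ≤ EX (W k) (ψ k)) (hWU : LU W U) (hψv : LU ψ v)
    (hcmp : ∀ k h r, IsLip h → (∀ x, 0 ≤ h x) → EqOff r h (W k) →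
      (∀ x, min (U x) (W k x) ≤ h x ∧ h x ≤ max (U x) (W k x)) → EX (W k) h ≤ 0)
    (hU : GMin U) : GMin v ∧ EqOff 1 v U := by
  have hvU : EqOff 1 v U := by
    intro x hx
    refine tendsto_nhds_unique (hψv.tendsto x) ?_
    have := hWU.tendsto x
    refine this.congr fun k => (hoff k x hx).symm
  have hv0 : ∀ x, 0 ≤ v x := fun x => ge_of_tendsto' (hψv.tendsto x) fun k => hψ0 k x
  have hUL : IsLip U := ⟨K, hUl⟩
  have hvL : IsLip v := ⟨K, hv⟩
  have key : ∫ x in ball 0 2, dens v x ≤ ∫ x in ball 0 2, dens U x := by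
    refine le_of_forall_pos_le_add fun δ hδ => ?_
    obtain ⟨t, ht, hann⟩ := annulus hn two_pos (((K : ℝ) + 1) ^ 2 + 1) (half_pos hδ)
    obtain ⟨k, h1, h2⟩ := ((lsc hψ hv hψv 2 (half_pos hδ)).and (hWU 2 t ht)).exists
    obtain ⟨h, hhL, hh0, hb, hoff', hintg⟩ := glue hn two_pos ht hUl (hW k) (hU 0).2.1 (hW0 k) (fun x hx => by
      rw [abs_sub_comm]; exact h2 x hx.le)
    have h3 := hcmp k h _ hhL hh0 hoff' hb
    have hWL : IsLip (W k) := ⟨K, hW k⟩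
    have hψL : IsLip (ψ k) := ⟨K, hψ k⟩
    rw [EX_eq hWL hhL hoff'.symm] at h3
    have h4 := hEX k
    rw [EX_eq hWL hψL ((hoff k).symm.mono (show (1:ℝ) ≤ 2 + t by linarith))] at h4
    have h5 := setInt_mono hψL (show (2:ℝ) ≤ 2 + t by linarith)
    linarith
  refine ⟨fun R => ⟨hvL, hv0, fun w hw hw0 r _ he => ?_⟩, hvU⟩
  have h1 : EqOff (max r 2) w v := he.mono (le_max_left _ _)
  have h2 : EqOff 2 U v := hvU.symm.mono (by norm_num)
  have h2' : EqOff (max r 2) U v := h2.mono (le_max_right _ _)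
  have h3 := EX_add hw hUL hvL (h1.trans h2'.symm) h2'
  have h4 := hU.ex hw hw0 (h1.trans h2'.symm)
  have h5 := EX_eq hUL hvL h2
  linarith

end ACF

namespace ACF
open Topology
variable {n : ℕ}

theorem integrableOn_dens' {u : Eu n → ℝ} (hu : IsLip u) (c : Eu n) (r : ℝ) :
    IntegrableOn (dens u) (ball c r) := by
  refine (integrableOn_dens hu (‖c‖ + r)).mono_set ?_
  refine ball_subset_ball' ?_
  rw [dist_zero_right]; linarith

theorem JE_eq {u : Eu n → ℝ} (hu : IsLip u) (c : Eu n) (r : ℝ) :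
    JE (univ ∩ ball c r) u = ENNReal.ofReal (∫ x in ball c r, dens u x) := by
  rw [univ_inter, ofReal_integral_eq_lintegral_ofReal (integrableOn_dens' hu c r)
    (Eventually.of_forall fun x => dens_nonneg u x)]
  unfold JE
  refine lintegral_congr fun x => ?_
  unfold dens
  rw [ENNReal.ofReal_add (by positivity) (by split_ifs <;> norm_num), ENNReal.ofReal_pow (norm_nonneg _)]
  congr 1
  · rw [ofReal_norm_eq_enorm]; rfl
  · split_ifs <;> simp

theorem gmin_of_isMin {u : Eu n → ℝ} (h : IsMinimizer univ u) (hL : IsLip u) : GMin u := by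
  intro R
  refine ⟨hL, h.1, fun v hv hv0 r _ he => ?_⟩
  have hsub : {x | v x ≠ u x} ⊆ ball 0 r := by
    intro x hx
    rw [mem_ball_zero_iff]
    by_contra hc
    exact hx (he x (not_lt.1 hc))
  obtain ⟨K, hK⟩ := id hv
  have := h.2.2 v hv0 hK.locallyLipschitz (isBounded_ball.subset hsub) (subset_univ _) 0 r hsub
  rw [JE_eq hL, JE_eq hv, ENNReal.ofReal_le_ofReal_iff (integral_nonneg fun x => dens_nonneg v x)] at this
  rw [EX_eq hv hL he]
  linarith

theorem isLip_of_loc {u v : Eu n → ℝ} (hu : IsLip u) (hv : LocallyLipschitz v) {R : ℝ} (hR : EqOff R v u) : IsLip v := by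
  obtain ⟨Ku, hKu⟩ := id hu
  set S := closedBall (0 : Eu n) (R + 1) with hS
  have hSc : IsCompact S := isCompact_closedBall _ _
  obtain ⟨Kv, hKv⟩ := (hv.locallyLipschitzOn (s := S)).exists_lipschitzOnWith_of_compact hSc
  obtain ⟨M, hM⟩ := hSc.exists_bound_of_continuousOn ((hv.continuous.sub hu.continuous).continuousOn (s := S))
  set w : Eu n → ℝ := fun x => v x - u x with hw
  have hw0 : ∀ x, R ≤ ‖x‖ → w x = 0 := fun x hx => sub_eq_zero.2 (hR x hx)
  have hwL : IsLip w := by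
    refine ⟨max (Kv + Ku) (Real.toNNReal M), LipschitzWith.of_dist_le_mul ?_⟩
    have hc1 : (Kv : ℝ) + Ku ≤ (max (Kv + Ku) (Real.toNNReal M) : ℝ≥0) := by
      exact_mod_cast le_max_left (Kv + Ku) (Real.toNNReal M)
    have hc2 : M ≤ (max (Kv + Ku) (Real.toNNReal M) : ℝ≥0) :=
      (Real.le_coe_toNNReal M).trans (by exact_mod_cast le_max_right (Kv + Ku) (Real.toNNReal M))
    set C : ℝ≥0 := max (Kv + Ku) (Real.toNNReal M)
    have main : ∀ x y, ‖x‖ ≤ ‖y‖ → dist (w x) (w y) ≤ C * dist x y := by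
      intro x y hxy
      rcases le_or_gt R ‖x‖ with h1 | h1
      · rw [hw0 x h1, hw0 y (h1.trans hxy), dist_self]; positivity
      · have hxS : x ∈ S := by rw [hS, mem_closedBall_zero_iff]; linarith
        rcases le_or_gt ‖y‖ (R + 1) with h2 | h2
        · have hyS : y ∈ S := by rw [hS, mem_closedBall_zero_iff]; linarith
          have a1 := hKv.dist_le_mul x hxS y hyS
          have a2 := hKu.dist_le_mul x y
          have a3 : dist (w x) (w y) ≤ dist (v x) (v y) + dist (u x) (u y) := by
            simp only [Real.dist_eq, hw]
            rw [show v x - u x - (v y - u y) = (v x - v y) - (u x - u y) by ring]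
            exact abs_sub _ _
          nlinarith [dist_nonneg (x := x) (y := y)]
        · have a1 := hM x hxS
          have a2 : 1 ≤ dist x y := by
            have := norm_sub_norm_le y x
            rw [dist_comm, dist_eq_norm]; linarith
          rw [hw0 y (by linarith), dist_zero_right]
          have : ‖w x‖ ≤ M := a1
          nlinarith [norm_nonneg (w x)]
    intro x y
    rcases le_total ‖x‖ ‖y‖ with h | h
    · exact main x y h
    · rw [dist_comm, dist_comm x]; exact main y x h
  have := hwL.add hu
  simpa [hw] using this

theorem isMin_of_gmin {u : Eu n → ℝ} (h : GMin u) : IsMinimizer univ u := by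
  have hL := (h 0).1
  obtain ⟨K, hK⟩ := id hL
  refine ⟨(h 0).2.1, hK.locallyLipschitz, fun v hv0 hv _ _ c r hsub => ?_⟩
  have he : EqOff (‖c‖ + r) v u := by
    intro x hx
    by_contra hne
    have := hsub (show x ∈ {x | v x ≠ u x} from hne)
    rw [mem_ball, dist_eq_norm] at this
    have h2 := norm_sub_norm_le x c
    linarith
  have hvL := isLip_of_loc hL hv he
  rw [JE_eq hL, JE_eq hvL]
  refine ENNReal.ofReal_le_ofReal ?_
  have h1 := h.ex hvL hv0 he
  have h2 : EX v u = ∫ x in ball c r, (dens v x - dens u x) := by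
    unfold EX
    refine (setIntegral_eq_integral_of_ae_compl_eq_zero ?_).symm
    filter_upwards [ae_dens_eq hvL hL] with x hx hxb
    rw [hx, sub_self]
    by_contra hne
    exact hxb (hsub hne)
  rw [h2, integral_sub (integrableOn_dens' hvL c r) (integrableOn_dens' hL c r)] at h1
  linarith

/-- Hypotheses on the cone. -/
structure Cone (U : Eu n → ℝ) (L : ℝ≥0) : Prop where
  gm : GMin U
  lip : LipschitzWith L U
  hom : ∀ t : ℝ, 0 < t → ∀ x, U (t • x) = t * U x
  ne : ∃ y, 0 < U y

theorem Cone.zero {U : Eu n → ℝ} {L : ℝ≥0} (h : Cone U L) : U 0 = 0 := by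
  have := h.hom 2 two_pos 0
  rw [smul_zero] at this; linarith

theorem Cone.nonneg {U : Eu n → ℝ} {L : ℝ≥0} (h : Cone U L) (x : Eu n) : 0 ≤ U x := (h.gm 0).2.1 x

theorem Cone.le {U : Eu n → ℝ} {L : ℝ≥0} (h : Cone U L) (x : Eu n) : U x ≤ L * ‖x‖ := by
  have := h.lip.dist_le_mul x 0
  rw [h.zero, dist_zero_right, dist_zero_right] at this
  exact (le_abs_self _).trans this

theorem Cone.sc {U : Eu n → ℝ} {L : ℝ≥0} (h : Cone U L) {d : ℝ} (hd : 0 < d) : sc d U = U := by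
  ext x; unfold ACF.sc; rw [h.hom d hd, ← mul_assoc, inv_mul_cancel₀ hd.ne', one_mul]

theorem cone_lip {U : Eu n → ℝ} (hl : LocallyLipschitz U) (hom : ∀ t : ℝ, 0 < t → ∀ x, U (t • x) = t * U x) :
    ∃ L, LipschitzWith L U := by
  obtain ⟨K, t, ht, hK⟩ := hl 0
  obtain ⟨ε, hε, hb⟩ := Metric.mem_nhds_iff.1 ht
  refine ⟨K, LipschitzWith.of_dist_le_mul fun x y => ?_⟩
  set s : ℝ := ε / (‖x‖ + ‖y‖ + 1) with hs
  have hs0 : 0 < s := by positivity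
  have hsε : s * (‖x‖ + ‖y‖ + 1) = ε := by rw [hs]; field_simp
  have hx : s • x ∈ t := hb (by
    rw [mem_ball_zero_iff, norm_smul, Real.norm_of_nonneg hs0.le]; nlinarith [norm_nonneg y])
  have hy : s • y ∈ t := hb (by
    rw [mem_ball_zero_iff, norm_smul, Real.norm_of_nonneg hs0.le]; nlinarith [norm_nonneg x])
  have := hK.dist_le_mul _ hx _ hy
  rw [hom s hs0, hom s hs0, dist_smul₀, Real.norm_of_nonneg hs0.le, Real.dist_eq, ← mul_sub, abs_mul,
    abs_of_pos hs0, ← Real.dist_eq] at this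
  refine le_of_mul_le_mul_left ?_ hs0
  linarith

/-- barrier -/
theorem barrier (hn : 0 < n) {U : Eu n → ℝ} {L : ℝ≥0} (h : Cone U L) : ∃ c : ℝ, 0 < c ∧ ∀ u : Eu n → ℝ,
    MinIn 2 u → (∀ x, U x ≤ u x) → (∀ᵐ x, ‖x‖ < 1 → 0 < u x) → c ≤ u 0 := by
  have hn' : (0:ℝ) < n := by exact_mod_cast hn
  obtain ⟨y, hy⟩ := h.ne
  have hy0 : 0 < ‖y‖ := by
    rw [norm_pos_iff]; rintro rfl; rw [h.zero] at hy; exact lt_irrefl _ hy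
  set p : Eu n := (1 / (4 * ‖y‖)) • y with hp
  have hpn : ‖p‖ = 1 / 4 := by
    rw [hp, norm_smul, Real.norm_of_nonneg (by positivity)]; field_simp
  set m : ℝ := U p with hm
  have hm0 : 0 < m := by rw [hm, hp, h.hom _ (by positivity)]; positivity
  set ρ : ℝ := m / (2 * (L + 1)) with hρ
  have hρ0 : 0 < ρ := by positivity
  have hUρ : ∀ x, ‖x - p‖ ≤ ρ → m / 2 ≤ U x := by
    intro x hx
    have h1 := h.lip.dist_le_mul x p
    rw [Real.dist_eq, dist_eq_norm, abs_le] at h1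
    have h2 : (L : ℝ) * ‖x - p‖ ≤ (L + 1) * ρ := by
      have := L.2
      nlinarith [norm_nonneg (x - p), NNReal.coe_nonneg L]
    have h3 : ((L : ℝ) + 1) * ρ = m / 2 := by rw [hρ]; field_simp
    linarith [h1.1]
  set β : ℝ := n / ρ ^ 2 with hβ
  have hβ0 : 0 < β := by positivity
  have hβρ : β * ρ ^ 2 = n := by rw [hβ]; field_simp
  set A : ℝ := m / 2 with hA
  have hA0 : 0 < A := by positivity
  set B : ℝ := -(A * Real.exp (-(β / 4))) with hB
  have hPx : ∀ x, gP A B β p x = A * (ga β p x - Real.exp (-(β / 4))) := by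
    intro x; unfold gP; rw [hB]; ring
  have hPneg : ∀ x, 1 / 2 ≤ ‖x - p‖ → gP A B β p x ≤ 0 := by
    intro x hx
    have : ga β p x ≤ Real.exp (-(β / 4)) := by
      unfold ga
      rw [Real.exp_le_exp]
      have : (1 / 2 : ℝ) ^ 2 ≤ ‖x - p‖ ^ 2 := by gcongr
      nlinarith
    rw [hPx]; nlinarith
  have hP0 : gP A B β p 0 = A * (Real.exp (-(β / 16)) - Real.exp (-(β / 4))) := by
    rw [hPx]; unfold ga; rw [zero_sub, norm_neg, hpn]; congr 3; ring
  have he : Real.exp (-(β / 4)) < Real.exp (-(β / 16)) := by rw [Real.exp_lt_exp]; linarith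
  refine ⟨A * (Real.exp (-(β / 16)) - Real.exp (-(β / 4))), mul_pos hA0 (by linarith), fun u hu hUu hpos => ?_⟩
  rw [← hP0]
  have hoff : ∀ x : Eu n, 3 / 4 ≤ ‖x‖ → gP A B β p x ≤ u x := by
    intro x hx
    refine (hPneg x ?_).trans (hu.2.1 x)
    have := norm_sub_norm_le x p
    linarith
  have hPL : IsLip (gP A B β p) := ⟨_, gP_lip A B hβ0.le p⟩
  refine cmp_lower hu.1 hu.2.1 hβ0.le hoff ?_ ?_ ?_ 0
  · exact hu.2.2 _ (hu.1.max hPL) (fun x => le_max_of_le_left (hu.2.1 x)) (3 / 4) (by norm_num)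
      fun x hx => max_eq_left (hoff x hx)
  · intro x hx
    have hxρ : ρ < ‖x - p‖ := by
      by_contra hc
      have h1 := hUρ x (not_lt.1 hc)
      have h2 := hUu x
      have h3 : ga β p x ≤ 1 := by
        unfold ga; rw [Real.exp_le_one_iff]; nlinarith [sq_nonneg ‖x - p‖]
      have h4 := Real.exp_pos (-(β / 4))
      rw [hPx] at hx
      nlinarith
    unfold gl
    have h1 : β * ρ ^ 2 < β * ‖x - p‖ ^ 2 := by gcongr
    have h2 : 0 < 4 * β ^ 2 * ‖x - p‖ ^ 2 - 2 * β * n := by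
      have h5 : (n : ℝ) < 2 * (β * ‖x - p‖ ^ 2) := by linarith
      have h6 := mul_lt_mul_of_pos_left h5 hβ0
      linarith
    exact mul_pos hA0 (mul_pos (ga_pos β p x) h2)
  · filter_upwards [hpos] with x hx h0 hlt
    exfalso
    have h1 : ‖x - p‖ < 1 / 2 := by
      by_contra hc
      have := hPneg x (not_lt.1 hc)
      linarith
    have h2 := norm_sub_norm_le x p
    have := hx (by linarith)
    linarith

theorem Cone.exists_zero (hn : 0 < n) {U : Eu n → ℝ} {L : ℝ≥0} (h : Cone U L) : ∃ x, x ≠ 0 ∧ U x = 0 := by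
  by_contra hc
  push Not at hc
  obtain ⟨c, hc0, hb⟩ := barrier hn h
  have := hb U (h.gm 2) (fun x => le_rfl) (by
    have : Nontrivial (Eu n) := by
      have : Nonempty (Fin n) := ⟨⟨0, hn⟩⟩
      infer_instance
    have h0 : ∀ᵐ x : Eu n, x ≠ 0 := by
      rw [ae_iff]; simp
    filter_upwards [h0] with x hx _
    exact lt_of_le_of_ne (h.nonneg x) (hc x hx).symm)
  rw [h.zero] at this
  linarith

end ACF

namespace ACF
open Topology
variable {n : ℕ}

theorem cut_lip (M : ℝ≥0) : LipschitzWith (2 * M) (fun x : Eu n => 2 * (M : ℝ) * max (1 - ‖x‖) 0) := by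
  have h1 : LipschitzWith 1 (fun x : Eu n => 1 - ‖x‖) := by
    have := (LipschitzWith.const (α := Eu n) (1 : ℝ)).sub (lipschitzWith_one_norm (E := Eu n))
    simpa using this
  have h2 := h1.max_const 0
  refine LipschitzWith.of_dist_le_mul fun x y => ?_
  have h3 := h2.dist_le_mul x y
  rw [Real.dist_eq] at h3 ⊢
  rw [← mul_sub, abs_mul, abs_of_nonneg (by positivity)]
  simp only [NNReal.coe_one, one_mul] at h3
  push_cast
  gcongr

theorem EX_nonpos_of_ae {u v : Eu n → ℝ} (h : ∀ᵐ x, dens u x ≤ dens v x) : EX u v ≤ 0 := by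
  unfold EX
  refine integral_nonpos_of_ae ?_
  filter_upwards [h] with x hx
  simpa using hx

theorem upper_setup (hn : 0 < n) {U : Eu n → ℝ} {L : ℝ≥0} (h : Cone U L) :
    ∃ (K : ℝ≥0) (D : ℝ), L ≤ K ∧ 0 ≤ D ∧ ∀ ε : ℝ, 0 < ε → ε ≤ 1 → ∃ W ψ : Eu n → ℝ,
      LipschitzWith K W ∧ LipschitzWith K ψ ∧ (∀ x, U x ≤ W x ∧ W x ≤ U x + D * ε) ∧ SubMin W ∧
      (∀ x, W x ≤ ψ x) ∧ EqOff 1 ψ W ∧ 0 ≤ EX W ψ ∧ MinIn (1 / 2) ψ ∧ 0 < ψ 0 := by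
  obtain ⟨y, hy⟩ := h.ne
  set M : ℝ≥0 := (L + 1) * (1 + ‖y‖₊) with hM
  have hM0 : (0 : ℝ) < M := by
    rw [hM]; push_cast; positivity
  obtain ⟨C, hC⟩ := thmA (n := n) hn (L + 2 * M)
  refine ⟨max L C, L * ‖y‖, le_max_left _ _, by positivity, fun ε hε hε1 => ?_⟩
  set W : Eu n → ℝ := fun x => max (U x) (U (x + ε • y)) with hW
  have hWl : LipschitzWith L W := by
    have := h.lip.max (LipT h.lip (ε • y))
    simpa using this
  have hWL : IsLip W := ⟨_, hWl⟩
  have hWsub : SubMin W := h.gm.sub.max (h.gm.translate (ε • y)).sub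
  have hWU : ∀ x, U x ≤ W x ∧ W x ≤ U x + L * ‖y‖ * ε := by
    intro x
    refine ⟨le_max_left _ _, max_le (by have : 0 ≤ L * ‖y‖ * ε := by positivity
                                        linarith) ?_⟩
    have := h.lip.dist_le_mul (x + ε • y) x
    rw [Real.dist_eq, dist_eq_norm, add_sub_cancel_left, norm_smul, Real.norm_of_nonneg hε.le, abs_le] at this
    linarith [this.2]
  have hWM : ∀ x, ‖x‖ ≤ 1 → W x ≤ M := by
    intro x hx
    have h1 := (hWU x).2
    have h2 := h.le x
    have h3 : (L : ℝ) * ‖x‖ ≤ L * 1 := by gcongr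
    have h4 : (L : ℝ) * ‖y‖ * ε ≤ L * ‖y‖ * 1 := by gcongr
    rw [hM]; push_cast
    nlinarith [norm_nonneg y]
  set T : Eu n → ℝ := fun x => 2 * (M : ℝ) * max (1 - ‖x‖) 0 with hT
  have hTl : LipschitzWith (2 * M) T := cut_lip M
  have hT0 : ∀ x, 0 ≤ T x := fun x => mul_nonneg (by positivity) (le_max_right _ _)
  set hi : Eu n → ℝ := fun x => max (W x) (min (W x + T x) M) with hhi
  have hhil : LipschitzWith (L + 2 * M) hi := by
    have := hWl.max ((hWl.add hTl).min_const (M : ℝ))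
    refine this.weaken ?_
    simp
  have heq : EqOff 1 W hi := by
    intro x hx
    have : T x = 0 := by simp only [hT]; rw [max_eq_right (by linarith), mul_zero]
    simp only [hhi, this, add_zero]
    exact (max_eq_left (min_le_left _ _)).symm
  have hWhi : ∀ x, W x ≤ hi x := fun x => le_max_left _ _
  obtain ⟨ψ, hψl, hψb, hψm⟩ := hC W hi (hWl.weaken le_self_add) hhil hWsub.2.1 hWhi heq
  have hψL : IsLip ψ := ⟨_, hψl⟩
  have hψ0 : ∀ x, 0 ≤ ψ x := fun x => (hWsub.2.1 x).trans (hψb x).1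
  have hhiM : ∀ x, hi x ≤ max (W x) M := fun x => max_le_max_left _ (min_le_right _ _)
  have hhi2 : ∀ x, ‖x‖ ≤ 1 / 2 → hi x = max (W x) M := by
    intro x hx
    have h1 : (M : ℝ) ≤ T x := by
      simp only [hT]; rw [max_eq_left (by linarith)]; nlinarith
    have h2 := hWsub.2.1 x
    simp only [hhi]
    rw [min_eq_right (by linarith)]
  refine ⟨W, ψ, hWl.weaken (le_max_left _ _), hψl.weaken (le_max_right _ _), hWU, hWsub, fun x => (hψb x).1, ?_,
    hψm W hWL fun x => ⟨le_rfl, hWhi x⟩, ⟨hψL, hψ0, fun v hv hv0 r hr he => ?_⟩, ?_⟩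
  · intro x hx
    have h1 := heq x hx
    have h2 := hψb x
    linarith
  · set v1 : Eu n → ℝ := fun x => min (v x) (max (W x) M) with hv1
    have hv1L : IsLip v1 := hv.min (hWL.max (isLip_const _))
    have hv10 : ∀ x, 0 ≤ v1 x := fun x => le_min (hv0 x) (le_max_of_le_left (hWsub.2.1 x))
    have hv1off : EqOff r v1 v := by
      intro x hx
      refine min_eq_left ?_
      rw [he x hx]
      exact (hψb x).2.trans (hhiM x)
    have e1 : EX v1 v ≤ 0 := by
      refine EX_nonpos_of_ae ?_
      filter_upwards [ae_dens_eq hv1L hv, ae_dens_eq hv1L (isLip_const (n := n) (M : ℝ))] with x a1 a2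
      rcases le_or_gt (v x) (max (W x) M) with hx | hx
      · exact (a1 (min_eq_left hx)).le
      · have hxr : ‖x‖ < r := by
          by_contra hc
          have := hv1off x (not_lt.1 hc)
          rw [← this] at hx
          exact absurd hx (not_lt.2 (min_le_right _ _))
        have hm : max (W x) (M : ℝ) = M := max_eq_right (hWM x (by linarith))
        rw [hm] at hx
        have : v1 x = M := by simp only [hv1]; rw [hm]; exact min_eq_right hx.le
        rw [a2 this]
        unfold dens
        rw [if_pos hM0, if_pos (hM0.trans hx)]
        have : gradient (fun _ : Eu n => (M : ℝ)) x = 0 := by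
          unfold gradient; simp
        rw [this, norm_zero]
        nlinarith [sq_nonneg ‖gradient v x‖]
    have hv1W : ∀ x, r ≤ ‖x‖ → W x ≤ v1 x := fun x hx => by
      rw [hv1off x hx, he x hx]; exact (hψb x).1
    have e2 := hWsub.2.2 v1 hv1L hv10 r hv1W
    have hv2off : EqOff r (fun x => max (v1 x) (W x)) v1 := fun x hx => max_eq_left (hv1W x hx)
    have e3 := hψm (fun x => max (v1 x) (W x)) (hv1L.max hWL) (fun x => by
      refine ⟨le_max_right _ _, ?_⟩
      rcases le_or_gt r ‖x‖ with hx | hx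
      · have a := (hv2off.trans (hv1off.trans he)) x hx
        have b := (hψb x).2
        exact a.le.trans b
      · rw [hhi2 x (by linarith)]
        exact max_le (min_le_right _ _) (le_max_left _ _))
    have e4 := EX_add (hv1L.max hWL) hv1L hv hv2off hv1off
    have e5 := EX_add (hv1L.max hWL) hv hψL (hv2off.trans hv1off) he
    linarith
  · refine lt_of_lt_of_le ?_ (hψb 0).1
    refine lt_of_lt_of_le ?_ (le_max_right _ _)
    rw [zero_add, h.hom ε hε]; positivity

theorem net_super {U : Eu n → ℝ} {L : ℝ≥0} (h : Cone U L) {ε : ℝ} (hε : 0 < ε) {t : Set (Eu n)} (ht : t.Finite)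
    (hb : ∀ y ∈ t, ‖y‖ ≤ 1) : ∃ W : Eu n → ℝ, LipschitzWith L W ∧ SuperMin W ∧ (∀ x, W x ≤ U x) ∧
      (∀ y ∈ t, ∀ x, W x ≤ U (x - ε • y)) ∧ ∀ x, U x - L * ε ≤ W x := by
  induction t, ht using Set.Finite.induction_on with
  | empty => exact ⟨U, h.lip, h.gm.super, fun x => le_rfl, by simp, fun x => by
      have : 0 ≤ L * ε := by positivity
      linarith⟩
  | @insert a s _ _ ih =>
    obtain ⟨W, h1, h2, h3, h4, h5⟩ := ih (fun y hy => hb y (mem_insert_of_mem _ hy))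
    have ha := hb a (mem_insert _ _)
    refine ⟨fun x => min (W x) (U (x + -(ε • a))), ?_, h2.min (h.gm.translate _).super,
      fun x => (min_le_left _ _).trans (h3 x), ?_, ?_⟩
    · have := h1.min (LipT h.lip (-(ε • a)))
      simpa using this
    · intro y hy x
      rcases mem_insert_iff.1 hy with rfl | hy
      · rw [sub_eq_add_neg]; exact min_le_right _ _
      · exact (min_le_left _ _).trans (h4 y hy x)
    · intro x
      refine le_min (h5 x) ?_
      have := h.lip.dist_le_mul (x + -(ε • a)) x
      rw [Real.dist_eq, dist_eq_norm, add_sub_cancel_left, norm_neg, norm_smul, Real.norm_of_nonneg hε.le, abs_le] at this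
      have h6 : (L : ℝ) * (ε * ‖a‖) ≤ L * (ε * 1) := by gcongr
      linarith [this.1]

theorem lower_setup (hn : 0 < n) {U : Eu n → ℝ} {L : ℝ≥0} (h : Cone U L) :
    ∃ (K : ℝ≥0) (D : ℝ), L ≤ K ∧ 0 ≤ D ∧ ∀ ε : ℝ, 0 < ε → ε ≤ 1 / 4 → ∃ W ψ : Eu n → ℝ,
      LipschitzWith K W ∧ LipschitzWith K ψ ∧ (∀ x, U x - D * ε ≤ W x ∧ W x ≤ U x) ∧ SuperMin W ∧
      (∀ x, ψ x ≤ W x) ∧ EqOff 1 ψ W ∧ 0 ≤ EX W ψ ∧ MinIn (1 / 2) ψ ∧ (∀ x, ‖x‖ ≤ ε / 2 → ψ x = 0) := by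
  obtain ⟨c, hc0, hc⟩ := nondeg (n := n) hn
  set M : ℝ≥0 := L with hM
  obtain ⟨C, hC⟩ := thmA (n := n) hn (L + 2 * M)
  have hδ0 : 0 < c / (L + 1) := by positivity
  obtain ⟨t, htb, htf, htc⟩ := finite_cover_balls_of_compact (isCompact_closedBall (0 : Eu n) 1) hδ0
  refine ⟨max L C, L, le_max_left _ _, by positivity, fun ε hε hε1 => ?_⟩
  obtain ⟨W, hWl, hWs, hWU, hWt, hWlow⟩ := net_super h hε htf (fun y hy => by simpa using htb hy)
  have hWL : IsLip W := ⟨_, hWl⟩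
  have hWc : ∀ x, ‖x‖ ≤ ε → W x ≤ c * ε := by
    intro x hx
    have hx1 : ε⁻¹ • x ∈ closedBall (0 : Eu n) 1 := by
      rw [mem_closedBall_zero_iff, norm_smul, Real.norm_of_nonneg (by positivity), inv_mul_le_iff₀ hε]; linarith
    obtain ⟨y, hy, hyx⟩ := mem_iUnion₂.1 (htc hx1)
    rw [mem_ball, dist_eq_norm] at hyx
    refine (hWt y hy x).trans ?_
    have e : x - ε • y = ε • (ε⁻¹ • x - y) := by
      rw [smul_sub, smul_smul, mul_inv_cancel₀ hε.ne', one_smul]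
    rw [e, h.hom ε hε]
    have h1 := h.le (ε⁻¹ • x - y)
    have h2 : (L : ℝ) * ‖ε⁻¹ • x - y‖ ≤ (L + 1) * (c / (L + 1)) := by gcongr; linarith
    have h3 : ((L : ℝ) + 1) * (c / (L + 1)) = c := by field_simp
    nlinarith
  have hWM : ∀ x, ‖x‖ ≤ 1 → W x ≤ M := by
    intro x hx
    have h1 := hWU x
    have h2 := h.le x
    have h3 : (L : ℝ) * ‖x‖ ≤ L * 1 := by gcongr
    rw [hM]; linarith
  set T : Eu n → ℝ := fun x => 2 * (M : ℝ) * max (1 - ‖x‖) 0 with hT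
  have hTl : LipschitzWith (2 * M) T := cut_lip M
  have hT0 : ∀ x, 0 ≤ T x := fun x => mul_nonneg (by positivity) (le_max_right _ _)
  set lo : Eu n → ℝ := fun x => max (W x - T x) 0 with hlo
  have hlol : LipschitzWith (L + 2 * M) lo := (hWl.sub hTl).max_const 0
  have heq : EqOff 1 lo W := by
    intro x hx
    have : T x = 0 := by simp only [hT]; rw [max_eq_right (by linarith), mul_zero]
    simp only [hlo, this, sub_zero]
    exact max_eq_left (hWs.2.1 x)
  have hloW : ∀ x, lo x ≤ W x := fun x => max_le (by have := hT0 x; linarith) (hWs.2.1 x)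
  obtain ⟨ψ, hψl, hψb, hψm⟩ := hC lo W hlol (hWl.weaken le_self_add) (fun x => le_max_right _ _) hloW heq
  have hψL : IsLip ψ := ⟨_, hψl⟩
  have hψ0 : ∀ x, 0 ≤ ψ x := fun x => (le_max_right _ _).trans (hψb x).1
  have hlo2 : ∀ x, ‖x‖ ≤ 1 / 2 → lo x = 0 := by
    intro x hx
    have h1 : (M : ℝ) ≤ T x := by
      simp only [hT]; rw [max_eq_left (by linarith)]; nlinarith [NNReal.coe_nonneg M]
    have h2 := hWM x (by linarith)
    exact max_eq_right (by linarith)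
  have hmin : MinIn (1 / 2) ψ := by
    refine ⟨hψL, hψ0, fun v hv hv0 r hr he => ?_⟩
    have hvW : ∀ x, r ≤ ‖x‖ → v x ≤ W x := fun x hx => by rw [he x hx]; exact (hψb x).2
    have e2 := hWs.2.2 v hv hv0 r hvW
    have hv1off : EqOff r (fun x => min (v x) (W x)) v := fun x hx => min_eq_left (hvW x hx)
    have e3 := hψm (fun x => min (v x) (W x)) (hv.min hWL) (fun x => by
      refine ⟨?_, min_le_right _ _⟩
      rcases le_or_gt r ‖x‖ with hx | hx
      · have a := (hv1off.trans he) x hx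
        have b := (hψb x).1
        exact b.trans a.ge
      · rw [hlo2 x (by linarith)]
        exact le_min (hv0 x) (hWs.2.1 x))
    have e4 := EX_add (hv.min hWL) hv hψL hv1off he
    linarith
  refine ⟨W, ψ, hWl.weaken (le_max_left _ _), hψl.weaken (le_max_right _ _), fun x => ⟨hWlow x, hWU x⟩, hWs,
    fun x => (hψb x).2, ?_, hψm W hWL fun x => ⟨hloW x, le_rfl⟩, hmin, ?_⟩
  · intro x hx
    have h1 := heq x hx
    have h2 := hψb x
    linarith
  · intro x hx
    refine hc ψ (1 / 2) 0 ε hmin hε (by rw [norm_zero]; linarith) ?_ x (by simpa using hx)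
    intro z hz
    rw [sub_zero] at hz
    exact (hψb z).2.trans (hWc z hz)

end ACF

namespace ACF
open Topology
variable {n : ℕ}

/-- nearest zero -/
theorem nearest_zero {f : Eu n → ℝ} (hf : Continuous f) (hf0 : ∀ x, 0 ≤ f x) (h0 : 0 < f 0) {z : Eu n} (hz : f z = 0) :
    ∃ w, f w = 0 ∧ 0 < ‖w‖ ∧ ‖w‖ ≤ ‖z‖ ∧ ∀ x, ‖x‖ < ‖w‖ → 0 < f x := by
  have hcl : IsClosed {x | f x = 0} := isClosed_eq hf continuous_const
  obtain ⟨w, hw, hd⟩ := hcl.exists_infDist_eq_dist ⟨z, hz⟩ 0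
  rw [dist_zero_left] at hd
  refine ⟨w, hw, ?_, ?_, fun x hx => ?_⟩
  · rw [norm_pos_iff]; rintro rfl; exact h0.ne' hw
  · rw [← hd, ← dist_zero_left]; exact infDist_le_dist_of_mem hz
  · refine lt_of_le_of_ne (hf0 x) fun hc => ?_
    have : infDist 0 {x | f x = 0} ≤ dist 0 x := infDist_le_dist_of_mem hc.symm
    rw [hd, dist_zero_left] at this
    linarith

theorem nearest_pos {f : Eu n → ℝ} (hf0 : ∀ x, 0 ≤ f x) {δ : ℝ} (hδ : 0 < δ)
    (h0 : ∀ x, ‖x‖ < δ → f x = 0) {z : Eu n} (hz : 0 < f z) :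
    ∃ w ∈ closure {x | 0 < f x}, 0 < ‖w‖ ∧ ‖w‖ ≤ ‖z‖ ∧ ∀ x, ‖x‖ < ‖w‖ → f x = 0 := by
  obtain ⟨w, hw, hd⟩ := (isClosed_closure (s := {x | 0 < f x})).exists_infDist_eq_dist ⟨z, subset_closure hz⟩ 0
  rw [dist_zero_left] at hd
  refine ⟨w, hw, ?_, ?_, fun x hx => ?_⟩
  · rw [norm_pos_iff]; rintro rfl
    obtain ⟨x, hx, hx2⟩ := Metric.mem_closure_iff.1 hw δ hδ
    rw [dist_zero_left] at hx2
    exact (show 0 < f x from hx).ne' (h0 x hx2)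
  · rw [← hd, ← dist_zero_left]; exact infDist_le_dist_of_mem (subset_closure hz)
  · by_contra hc
    have : infDist 0 (closure {x | 0 < f x}) ≤ dist 0 x :=
      infDist_le_dist_of_mem (subset_closure (lt_of_le_of_ne (hf0 x) (Ne.symm hc)))
    rw [hd, dist_zero_left] at this
    linarith

theorem sc_mono {d : ℝ} (hd : 0 < d) {u v : Eu n → ℝ} (h : ∀ x, u x ≤ v x) (x : Eu n) : sc d u x ≤ sc d v x :=
  mul_le_mul_of_nonneg_left (h _) (inv_nonneg.2 hd.le)

theorem sc_pos {d : ℝ} (hd : 0 < d) {u : Eu n → ℝ} {w : Eu n} (hw : ‖w‖ = d) (h : ∀ x, ‖x‖ < ‖w‖ → 0 < u x) (x : Eu n)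
    (hx : ‖x‖ < 1) : 0 < sc d u x := by
  refine mul_pos (inv_pos.2 hd) (h _ ?_)
  rw [norm_smul, Real.norm_of_nonneg hd.le, hw]; nlinarith

theorem sc_zero {d : ℝ} (hd : 0 < d) {u : Eu n → ℝ} {w : Eu n} (hw : ‖w‖ = d) (h : ∀ x, ‖x‖ < ‖w‖ → u x = 0) (x : Eu n)
    (hx : ‖x‖ < 1) : sc d u x = 0 := by
  unfold sc
  rw [h, mul_zero]
  rw [norm_smul, Real.norm_of_nonneg hd.le, hw]; nlinarith

theorem sc_at {d : ℝ} (hd : 0 < d) (u : Eu n → ℝ) (w : Eu n) : sc d u (d⁻¹ • w) = d⁻¹ * u w := by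
  unfold sc; rw [smul_smul, mul_inv_cancel₀ hd.ne', one_smul]

theorem sc_closure {d : ℝ} (hd : 0 < d) {u : Eu n → ℝ} {w : Eu n} (hw : w ∈ closure {x | 0 < u x}) :
    d⁻¹ • w ∈ closure {x | 0 < sc d u x} := by
  have : Continuous (fun x : Eu n => d⁻¹ • x) := continuous_const_smul _
  refine map_mem_closure this hw fun x hx => ?_
  show 0 < sc d u (d⁻¹ • x)
  rw [sc_at hd]
  exact mul_pos (inv_pos.2 hd) hx

theorem lim_scale {d : ℕ → ℝ} (hd0 : ∀ j, 0 < d j) (hd : ∀ j : ℕ, d j ≤ 1 / ((j : ℝ) + 4)) :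
    Tendsto (fun j => 1 / 2 / d j) atTop atTop := by
  have h1 : Tendsto (fun j : ℕ => (j : ℝ) / 2) atTop atTop :=
    tendsto_natCast_atTop_atTop.atTop_div_const two_pos
  refine tendsto_atTop_mono (fun j => ?_) h1
  rw [le_div_iff₀ (hd0 j)]
  have h2 := hd j
  rw [le_div_iff₀ (by positivity)] at h2
  have := hd0 j
  nlinarith

theorem eps_lim (D : ℝ) : Tendsto (fun j : ℕ => D * (1 / ((j : ℝ) + 4))) atTop (𝓝 0) := by
  have h1 : Tendsto (fun j : ℕ => (j : ℝ) + 4) atTop atTop :=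
    tendsto_atTop_add_const_right _ _ tendsto_natCast_atTop_atTop
  have := (tendsto_inv_atTop_zero.comp h1).const_mul D
  simpa [Function.comp_def] using this

theorem lu_of_bound {W : ℕ → Eu n → ℝ} {U : Eu n → ℝ} {D : ℝ}
    (h : ∀ k x, |W k x - U x| ≤ D * (1 / ((k : ℝ) + 4))) : LU W U := by
  intro r ε hε
  filter_upwards [(eps_lim D).eventually (ge_mem_nhds hε)] with k hk x _
  exact (h k x).trans hk

theorem LU.sub {f : ℕ → Eu n → ℝ} {g : Eu n → ℝ} (h : LU f g) {φ : ℕ → ℕ} (hφ : StrictMono φ) :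
    LU (fun k => f (φ k)) g := fun r ε hε => hφ.tendsto_atTop.eventually (h r ε hε)

theorem upper_raw (hn : 0 < n) {U : Eu n → ℝ} {L : ℝ≥0} (h : Cone U L) :
    ∃ f : Eu n → ℝ, GMin f ∧ (∀ x, U x ≤ f x) ∧ 0 < f 0 ∧ ∃ z, f z = 0 := by
  obtain ⟨c, hc0, hbar⟩ := barrier hn h
  obtain ⟨K, D, hLK, hD, hset⟩ := upper_setup hn h
  have hset' := fun k : ℕ => hset (1 / ((k : ℝ) + 4)) (by positivity) (by
    rw [div_le_one (by positivity)]; have : (0:ℝ) ≤ k := by positivity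
    linarith)
  choose W ψ hWl hψl hWU hWs hWψ hoff hEX hmin hpos using hset'
  have hUψ : ∀ k x, U x ≤ ψ k x := fun k x => (hWU k x).1.trans (hWψ k x)
  by_cases hcase : ∃ δ : ℝ, 0 < δ ∧ ∃ᶠ k in atTop, ∀ x, ‖x‖ < δ → 0 < ψ k x
  · obtain ⟨δ, hδ, hfr⟩ := hcase
    obtain ⟨φ, hφ, hφpos⟩ := extraction_of_frequently_atTop hfr
    obtain ⟨e, he1⟩ : ∃ e : Eu n, ‖e‖ = 1 := by
      have : Nonempty (Fin n) := ⟨⟨0, hn⟩⟩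
      exact exists_norm_eq (Eu n) zero_le_one
    obtain ⟨φ', v, hφ', hvl, hLUv⟩ := arzela (f := fun k => ψ (φ k)) (fun k => hψl (φ k)) (M := K + (L + D)) (fun k => by
      rw [abs_of_pos (hpos _)]
      have h1 := (hψl (φ k)).dist_le_mul 0 e
      rw [Real.dist_eq, dist_zero_left, he1, mul_one] at h1
      have h2 := (abs_le.1 h1).2
      have h3 := hoff (φ k) e he1.ge
      have h4 := (hWU (φ k) e).2
      have h5 := h.le e
      rw [he1, mul_one] at h5
      have h6 : D * (1 / (((φ k : ℕ) : ℝ) + 4)) ≤ D * 1 := by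
        refine mul_le_mul_of_nonneg_left ?_ hD
        rw [div_le_one (by positivity)]
        have : (0:ℝ) ≤ (φ k : ℕ) := by positivity
        linarith
      linarith)
    set θ : ℕ → ℕ := fun k => φ (φ' k) with hθ
    have hθm : StrictMono θ := hφ.comp hφ'
    have hLUW : LU (fun k => W (θ k)) U := by
      refine LU.sub (f := W) (lu_of_bound (D := D) fun k x => ?_) hθm
      have := hWU k x
      rw [abs_of_nonneg (by linarith)]; linarith
    obtain ⟨hvG, hvU⟩ := lemB hn (fun k => hψl (θ k)) (fun k => hWl (θ k)) (fun k => (hWs (θ k)).2.1)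
      (fun k => (hmin (θ k)).2.1) hvl (h.lip.weaken hLK) (fun k => hoff (θ k)) (fun k => hEX (θ k)) hLUW hLUv
      (fun k g r hg hg0 hgoff hgb => by
        have hle : ∀ x, g x ≤ W (θ k) x := fun x => by
          have := (hgb x).2
          rwa [max_eq_right (hWU (θ k) x).1] at this
        have := (hWs (θ k)).2.2 g hg hg0 r (fun x hx => (hgoff x hx).ge)
        have e : (fun x => max (g x) (W (θ k) x)) = W (θ k) := by
          ext x; exact max_eq_right (hle x)
        rwa [e] at this) h.gm
    refine ⟨v, hvG, fun x => ge_of_tendsto' (hLUv.tendsto x) fun k => hUψ _ x, ?_, ?_⟩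
    · set d : ℝ := min δ (1 / 4) with hd
      have hd0 : 0 < d := lt_min hδ (by norm_num)
      have hd4 : d ≤ 1 / 4 := min_le_right _ _
      have : d * c ≤ v 0 := by
        refine ge_of_tendsto' (hLUv.tendsto 0) fun k => ?_
        have h1 := (hmin (θ k)).sc hd0
        have h2 : MinIn 2 (sc d (ψ (θ k))) := by
          refine ⟨h1.1, h1.2.1, fun v hv hv0 r hr he => h1.2.2 v hv hv0 r (hr.trans_le ?_) he⟩
          rw [le_div_iff₀ hd0]; linarith
        have h3 := hbar _ h2 (fun x => by
          have := sc_mono hd0 (hUψ (θ k)) x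
          rwa [h.sc hd0] at this) (Eventually.of_forall fun x hx => by
            refine mul_pos (inv_pos.2 hd0) (hφpos (φ' k) _ ?_)
            rw [norm_smul, Real.norm_of_nonneg hd0.le]
            have : d ≤ δ := min_le_left _ _
            nlinarith)
        unfold sc at h3
        rw [smul_zero, le_inv_mul_iff₀ hd0] at h3
        exact h3
      exact lt_of_lt_of_le (mul_pos hd0 hc0) this
    · obtain ⟨x, hx0, hx⟩ := h.exists_zero hn
      have hxn : 0 < ‖x‖ := norm_pos_iff.2 hx0
      refine ⟨‖x‖⁻¹ • x, ?_⟩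
      rw [hvU _ (by rw [norm_smul, norm_inv, norm_norm, inv_mul_cancel₀ hxn.ne']), h.hom _ (inv_pos.2 hxn), hx, mul_zero]
  · push Not at hcase
    have hj : ∀ j : ℕ, ∃ k, ∃ w, ψ k w = 0 ∧ 0 < ‖w‖ ∧ ‖w‖ ≤ 1 / ((j : ℝ) + 4) ∧ ∀ x, ‖x‖ < ‖w‖ → 0 < ψ k x := by
      intro j
      obtain ⟨k, x, hx1, hx2⟩ := (hcase (1 / ((j : ℝ) + 4)) (by positivity)).exists
      obtain ⟨w, a, b, c, d⟩ := nearest_zero (hmin k).1.continuous (hmin k).2.1 (hpos k)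
        (le_antisymm hx2 ((hmin k).2.1 x))
      exact ⟨k, w, a, b, c.trans hx1.le, d⟩
    choose κ w hw0 hwp hwle hwpos using hj
    set d : ℕ → ℝ := fun j => ‖w j‖ with hd
    set F : ℕ → Eu n → ℝ := fun j => sc (d j) (ψ (κ j)) with hF
    have hFl : ∀ j, LipschitzWith K (F j) := fun j => sc_lip (hwp j) (hψl _)
    have hFm : ∀ j, MinIn (1 / 2 / d j) (F j) := fun j => (hmin (κ j)).sc (hwp j)
    set z : ℕ → Eu n := fun j => (d j)⁻¹ • w j with hz
    have hz1 : ∀ j, ‖z j‖ = 1 := fun j => by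
      simp only [hz]
      rw [norm_smul, norm_inv, Real.norm_of_nonneg (hwp j).le, inv_mul_cancel₀ (hwp j).ne']
    have hFz : ∀ j, F j (z j) = 0 := fun j => by
      simp only [hF, hz]; rw [sc_at (hwp j), hw0, mul_zero]
    have hFpos : ∀ j x, ‖x‖ < 1 → 0 < F j x := fun j x hx => sc_pos (hwp j) rfl (hwpos j) x hx
    have hFU : ∀ j x, U x ≤ F j x := fun j x => by
      have := sc_mono (hwp j) (hUψ (κ j)) x
      rwa [h.sc (hwp j)] at this
    obtain ⟨φ, f, hφ, hfl, hLU⟩ := arzela hFl (M := K) (fun j => by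
      have h1 := (hFl j).dist_le_mul 0 (z j)
      rw [Real.dist_eq, dist_zero_left, hz1, mul_one, hFz, sub_zero] at h1
      exact h1)
    have hG : GMin f := lemC hn (fun k => hFl (φ k)) (R := fun k => 1 / 2 / d (φ k))
      ((lim_scale hwp hwle).comp hφ.tendsto_atTop) (fun k => hFm (φ k)) hfl hLU
    refine ⟨f, hG, fun x => ge_of_tendsto' (hLU.tendsto x) fun k => hFU _ x, ?_, ?_⟩
    · refine lt_of_lt_of_le hc0 (ge_of_tendsto' (hLU.tendsto 0) fun k => ?_)
      have h1 := hFm (φ k)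
      refine hbar _ ⟨h1.1, h1.2.1, fun v hv hv0 r hr he => h1.2.2 v hv hv0 r (hr.trans_le ?_) he⟩ (hFU _)
        (Eventually.of_forall fun x hx => hFpos _ x hx)
      rw [le_div_iff₀ (hwp _)]
      have h2 := hwle (φ k)
      have h3 : (1 : ℝ) / (((φ k : ℕ) : ℝ) + 4) ≤ 1 / 4 := by
        gcongr
        have : (0:ℝ) ≤ (φ k : ℕ) := by positivity
        linarith
      have h4 : d (φ k) ≤ 1 / 4 := h2.trans h3
      linarith
    · by_contra hcon
      push Not at hcon
      have hfpos : ∀ x, 0 < f x := fun x => lt_of_le_of_ne ((hG 0).2.1 x) (hcon x).symm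
      obtain ⟨x0, _, hx0⟩ := (isCompact_closedBall (0 : Eu n) 1).exists_isMinOn ⟨0, by simp⟩ hfl.continuous.continuousOn
      obtain ⟨k, hk⟩ := (hLU 1 (f x0 / 2) (half_pos (hfpos x0))).exists
      have h1 : |F (φ k) (z (φ k)) - f (z (φ k))| ≤ f x0 / 2 := hk (z (φ k)) (hz1 _).le
      rw [hFz, zero_sub, abs_neg, abs_of_pos (hfpos _)] at h1
      have h2 : f x0 ≤ f (z (φ k)) := hx0 (by rw [mem_closedBall_zero_iff]; exact (hz1 _).le)
      have := hfpos x0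
      linarith

theorem lower_raw (hn : 0 < n) {U : Eu n → ℝ} {L : ℝ≥0} (h : Cone U L) :
    ∃ f : Eu n → ℝ, GMin f ∧ (∀ x, f x ≤ U x) ∧ (∃ δ : ℝ, 0 < δ ∧ ∀ x, ‖x‖ < δ → f x = 0) ∧ ∃ z, 0 < f z := by
  obtain ⟨c, hc0, hnd⟩ := nondeg (n := n) hn
  obtain ⟨K, D, hLK, hD, hset⟩ := lower_setup hn h
  have hset' := fun k : ℕ => hset (1 / ((k : ℝ) + 4)) (by positivity) (by
    gcongr; have : (0:ℝ) ≤ k := by positivity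
    linarith)
  choose W ψ hWl hψl hWU hWs hWψ hoff hEX hmin hzero using hset'
  have hUψ : ∀ k x, ψ k x ≤ U x := fun k x => (hWψ k x).trans (hWU k x).2
  have hψ00 : ∀ k, ψ k 0 = 0 := fun k => hzero k 0 (by rw [norm_zero]; positivity)
  by_cases hcase : ∃ δ : ℝ, 0 < δ ∧ ∃ᶠ k in atTop, ∀ x, ‖x‖ < δ → ψ k x = 0
  · obtain ⟨δ, hδ, hfr⟩ := hcase
    obtain ⟨φ, hφ, hφz⟩ := extraction_of_frequently_atTop hfr
    obtain ⟨φ', v, hφ', hvl, hLUv⟩ := arzela (f := fun k => ψ (φ k)) (fun k => hψl (φ k)) (M := 0) (fun k => by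
      rw [hψ00, abs_zero])
    set θ : ℕ → ℕ := fun k => φ (φ' k) with hθ
    have hθm : StrictMono θ := hφ.comp hφ'
    have hLUW : LU (fun k => W (θ k)) U := by
      refine LU.sub (f := W) (lu_of_bound (D := D) fun k x => ?_) hθm
      have := hWU k x
      rw [abs_of_nonpos (by linarith)]; linarith
    obtain ⟨hvG, hvU⟩ := lemB hn (fun k => hψl (θ k)) (fun k => hWl (θ k)) (fun k => (hWs (θ k)).2.1)
      (fun k => (hmin (θ k)).2.1) hvl (h.lip.weaken hLK) (fun k => hoff (θ k)) (fun k => hEX (θ k)) hLUW hLUv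
      (fun k g r hg hg0 hgoff hgb => by
        have hle : ∀ x, W (θ k) x ≤ g x := fun x => by
          have := (hgb x).1
          rwa [min_eq_right (hWU (θ k) x).2] at this
        have := (hWs (θ k)).2.2 g hg hg0 r (fun x hx => (hgoff x hx).le)
        have e : (fun x => min (g x) (W (θ k) x)) = W (θ k) := by
          ext x; exact min_eq_right (hle x)
        rwa [e] at this) h.gm
    refine ⟨v, hvG, fun x => le_of_tendsto' (hLUv.tendsto x) fun k => hUψ _ x, ⟨δ, hδ, fun x hx => ?_⟩, ?_⟩
    · refine tendsto_nhds_unique (hLUv.tendsto x) ?_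
      refine tendsto_const_nhds.congr fun k => (hφz (φ' k) x hx).symm
    · obtain ⟨y, hy⟩ := h.ne
      have hyn : 0 < ‖y‖ := by
        rw [norm_pos_iff]; rintro rfl; rw [h.zero] at hy; exact lt_irrefl _ hy
      refine ⟨‖y‖⁻¹ • y, ?_⟩
      rw [hvU _ (by rw [norm_smul, norm_inv, norm_norm, inv_mul_cancel₀ hyn.ne']), h.hom _ (inv_pos.2 hyn)]
      positivity
  · push Not at hcase
    have hj : ∀ j : ℕ, ∃ k, ∃ w ∈ closure {x | 0 < ψ k x}, 0 < ‖w‖ ∧ ‖w‖ ≤ 1 / ((j : ℝ) + 4 + 1) ∧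
        ∀ x, ‖x‖ < ‖w‖ → ψ k x = 0 := by
      intro j
      obtain ⟨k, x, hx1, hx2⟩ := (hcase (1 / ((j : ℝ) + 4 + 1)) (by positivity)).exists
      obtain ⟨w, a, b, c, d⟩ := nearest_pos (hmin k).2.1 (δ := 1 / ((k : ℝ) + 4) / 2) (by positivity)
        (fun x hx => hzero k x hx.le) (lt_of_le_of_ne ((hmin k).2.1 x) (Ne.symm hx2))
      exact ⟨k, w, a, b, c.trans hx1.le, d⟩
    choose κ w hwcl hwp hwle' hwz using hj
    have hwle : ∀ j : ℕ, ‖w j‖ ≤ 1 / ((j : ℝ) + 4) := fun j => (hwle' j).trans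
      (one_div_le_one_div_of_le (by positivity) (by linarith))
    set d : ℕ → ℝ := fun j => ‖w j‖ with hd
    set F : ℕ → Eu n → ℝ := fun j => sc (d j) (ψ (κ j)) with hF
    have hFl : ∀ j, LipschitzWith K (F j) := fun j => sc_lip (hwp j) (hψl _)
    have hFm : ∀ j, MinIn (1 / 2 / d j) (F j) := fun j => (hmin (κ j)).sc (hwp j)
    set z : ℕ → Eu n := fun j => (d j)⁻¹ • w j with hz
    have hz1 : ∀ j, ‖z j‖ = 1 := fun j => by
      simp only [hz]
      rw [norm_smul, norm_inv, Real.norm_of_nonneg (hwp j).le, inv_mul_cancel₀ (hwp j).ne']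
    have hFz : ∀ j, z j ∈ closure {x | 0 < F j x} := fun j => sc_closure (hwp j) (hwcl j)
    have hFzero : ∀ j x, ‖x‖ < 1 → F j x = 0 := fun j x hx => sc_zero (hwp j) rfl (hwz j) x hx
    have hFU : ∀ j x, F j x ≤ U x := fun j x => by
      have := sc_mono (hwp j) (hUψ (κ j)) x
      rwa [h.sc (hwp j)] at this
    obtain ⟨φ, f, hφ, hfl, hLU⟩ := arzela hFl (M := 0) (fun j => by
      rw [hFzero j 0 (by simp), abs_zero])
    have hG : GMin f := lemC hn (fun k => hFl (φ k)) (R := fun k => 1 / 2 / d (φ k))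
      ((lim_scale hwp hwle).comp hφ.tendsto_atTop) (fun k => hFm (φ k)) hfl hLU
    refine ⟨f, hG, fun x => le_of_tendsto' (hLU.tendsto x) fun k => hFU _ x, ⟨1, one_pos, fun x hx => ?_⟩, ?_⟩
    · refine tendsto_nhds_unique (hLU.tendsto x) ?_
      exact tendsto_const_nhds.congr fun k => (hFzero _ x hx).symm
    · by_contra hcon
      push Not at hcon
      obtain ⟨k, hk⟩ := (hLU 2 c hc0).exists
      have hR : ‖z (φ k)‖ + 1 < 1 / 2 / d (φ k) := by
        rw [hz1, lt_div_iff₀ (hwp _)]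
        have h2 := hwle' (φ k)
        have h3 : (1 : ℝ) / (((φ k : ℕ) : ℝ) + 4 + 1) < 1 / 4 := by
          have : (0:ℝ) ≤ (φ k : ℕ) := by positivity
          exact one_div_lt_one_div_of_lt (by norm_num) (by linarith)
        have h4 : d (φ k) < 1 / 4 := h2.trans_lt h3
        linarith
      have h1 := hnd (F (φ k)) _ (z (φ k)) 1 (hFm _) one_pos hR (fun x hx => by
        have hx2 : ‖x‖ ≤ 2 := by
          have := norm_sub_norm_le x (z (φ k))
          rw [hz1] at this
          linarith
        have h2 := (abs_le.1 (hk x hx2)).2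
        have h3 := hcon x
        linarith)
      obtain ⟨x, hx, hx2⟩ := Metric.mem_closure_iff.1 (hFz (φ k)) (1 / 2) (by norm_num)
      rw [dist_comm, dist_eq_norm] at hx2
      exact (show 0 < F (φ k) x from hx).ne' (h1 x hx2.le)

theorem upper_fin (hn : 0 < n) {U : Eu n → ℝ} {L : ℝ≥0} (h : Cone U L) :
    ∃ f : Eu n → ℝ, GMin f ∧ (∀ x, U x ≤ f x) ∧ (∀ x, ‖x‖ < 1 → 0 < f x) ∧ ∃ z, ‖z‖ = 1 ∧ f z = 0 := by
  obtain ⟨f, hG, hU, h0, z, hz⟩ := upper_raw hn h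
  obtain ⟨w, hw, hwp, -, hwpos⟩ := nearest_zero (hG 0).1.continuous (hG 0).2.1 h0 hz
  refine ⟨sc ‖w‖ f, hG.sc hwp, fun x => ?_, sc_pos hwp rfl hwpos, ‖w‖⁻¹ • w, ?_, ?_⟩
  · have := sc_mono hwp hU x
    rwa [h.sc hwp] at this
  · rw [norm_smul, norm_inv, norm_norm, inv_mul_cancel₀ hwp.ne']
  · rw [sc_at hwp, hw, mul_zero]

theorem lower_fin (hn : 0 < n) {U : Eu n → ℝ} {L : ℝ≥0} (h : Cone U L) :
    ∃ f : Eu n → ℝ, GMin f ∧ (∀ x, f x ≤ U x) ∧ (∀ x, ‖x‖ < 1 → f x = 0) ∧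
      ∃ z ∈ closure {x | 0 < f x}, ‖z‖ = 1 := by
  obtain ⟨f, hG, hU, ⟨δ, hδ, h0⟩, z, hz⟩ := lower_raw hn h
  obtain ⟨w, hw, hwp, -, hwz⟩ := nearest_pos (hG 0).2.1 hδ h0 hz
  refine ⟨sc ‖w‖ f, hG.sc hwp, fun x => ?_, sc_zero hwp rfl hwz, ‖w‖⁻¹ • w, sc_closure hwp hw, ?_⟩
  · have := sc_mono hwp hU x
    rwa [h.sc hwp] at this
  · rw [norm_smul, norm_inv, norm_norm, inv_mul_cancel₀ hwp.ne']

theorem infDist_one {S : Set (Eu n)} {z : Eu n} (hz : z ∈ S) (hz1 : ‖z‖ = 1) (h : ∀ x ∈ S, 1 ≤ ‖x‖) :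
    infDist 0 S = 1 := by
  refine le_antisymm ?_ ?_
  · have := infDist_le_dist_of_mem (x := 0) hz
    rwa [dist_zero_left, hz1] at this
  · rw [le_infDist ⟨z, hz⟩]
    intro y hy
    rw [dist_zero_left]; exact h y hy

theorem mem_clb {z : Eu n} (hn : 0 < n) (hz : ‖z‖ = 1) : z ∈ closure (ball (0 : Eu n) 1) := by
  rw [closure_ball _ one_ne_zero, mem_closedBall_zero_iff]; exact hz.le

end ACF

theorem stmt10 {n : ℕ} (hn : 2 ≤ n) (U₀ : EuclideanSpace ℝ (Fin n) → ℝ)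
    (hU₀min : IsMinimizer (Set.univ : Set (EuclideanSpace ℝ (Fin n))) U₀)
    (hU₀ne : U₀ ≠ 0)
    (hU₀hom : ∀ t : ℝ, 0 < t → ∀ x, U₀ (t • x) = t * U₀ x)
    (h0 : (0 : EuclideanSpace ℝ (Fin n)) ∈ frontier {x | 0 < U₀ x}) :
    ∃ Ubar Ulow : EuclideanSpace ℝ (Fin n) → ℝ,
      IsMinimizer (Set.univ : Set (EuclideanSpace ℝ (Fin n))) Ubar ∧
      IsMinimizer (Set.univ : Set (EuclideanSpace ℝ (Fin n))) Ulow ∧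
      (∀ x, Ulow x ≤ U₀ x ∧ U₀ x ≤ Ubar x) ∧
      Metric.ball (0 : EuclideanSpace ℝ (Fin n)) 1 ⊆ {x | 0 < Ubar x} ∧
      Metric.ball (0 : EuclideanSpace ℝ (Fin n)) 1 ⊆ {x | Ulow x = 0} ∧
      (frontier {x | 0 < Ubar x}).Nonempty ∧
      (frontier {x | 0 < Ulow x}).Nonempty ∧
      Metric.infDist (0 : EuclideanSpace ℝ (Fin n)) (frontier {x | 0 < Ubar x}) = 1 ∧
      Metric.infDist (0 : EuclideanSpace ℝ (Fin n)) (frontier {x | 0 < Ulow x}) = 1 := by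
  have hn0 : 0 < n := by omega
  obtain ⟨L, hL⟩ := ACF.cone_lip hU₀min.2.1 hU₀hom
  have hcone : ACF.Cone U₀ L := ⟨ACF.gmin_of_isMin hU₀min ⟨L, hL⟩, hL, hU₀hom, by
    by_contra hc
    push Not at hc
    exact hU₀ne (funext fun x => le_antisymm (hc x) (hU₀min.1 x))⟩
  obtain ⟨f, hf, hfU, hfpos, z, hz1, hz⟩ := ACF.upper_fin hn0 hcone
  obtain ⟨g, hg, hgU, hgz, y, hy, hy1⟩ := ACF.lower_fin hn0 hcone
  have hfo : IsOpen {x | 0 < f x} := isOpen_lt continuous_const (hf 0).1.continuous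
  have hgo : IsOpen {x | 0 < g x} := isOpen_lt continuous_const (hg 0).1.continuous
  have hbf : Metric.ball (0 : EuclideanSpace ℝ (Fin n)) 1 ⊆ {x | 0 < f x} := fun x hx =>
    hfpos x (mem_ball_zero_iff.1 hx)
  have hbg : Metric.ball (0 : EuclideanSpace ℝ (Fin n)) 1 ⊆ {x | g x = 0} := fun x hx =>
    hgz x (mem_ball_zero_iff.1 hx)
  have hzf : z ∈ frontier {x | 0 < f x} := by
    rw [hfo.frontier_eq]
    exact ⟨closure_mono hbf (ACF.mem_clb hn0 hz1), fun hc => (show 0 < f z from hc).ne' hz⟩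
  have hyg : y ∈ frontier {x | 0 < g x} := by
    rw [hgo.frontier_eq]
    refine ⟨hy, fun hc => (show 0 < g y from hc).ne' ?_⟩
    have hcl : IsClosed {x | g x = 0} := isClosed_eq (hg 0).1.continuous continuous_const
    exact hcl.closure_subset_iff.2 hbg (ACF.mem_clb hn0 hy1)
  refine ⟨f, g, ACF.isMin_of_gmin hf, ACF.isMin_of_gmin hg, fun x => ⟨hgU x, hfU x⟩, hbf, hbg, ⟨z, hzf⟩, ⟨y, hyg⟩,
    ACF.infDist_one hzf hz1 ?_, ACF.infDist_one hyg hy1 ?_⟩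
  · intro x hx
    rw [hfo.frontier_eq] at hx
    by_contra hc
    exact hx.2 (hfpos x (not_le.1 hc))
  · intro x hx
    by_contra hc
    obtain ⟨w, hw, hw2⟩ := Metric.mem_closure_iff.1 hx.1 (1 - ‖x‖) (by linarith [not_le.1 hc])
    rw [dist_comm, dist_eq_norm] at hw2
    have := norm_sub_norm_le w x
    exact (show 0 < g w from hw).ne' (hgz w (by linarith))
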